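/- arXiv:math/0606188 — 2 statements merged into one kernel-verified Lean document; each statement's English description precedes it below -/
import Mathlib

section
/- The Continuum Hypothesis holds if and only if the set of all real numbers that are transcendental over ℚ can be written as the union of countably many transcendence bases of ℝ over ℚ. -/
/-!
Let `A` be a domain over a ring `R` with `#R ≤ κ`, where `κ` is infinite; the case of interest is
`A = ℝ`, `R = ℚ`, `κ = ℵ₀`.

If `#A ≤ κ⁺`, well-order a transcendence basis `t` of `A` so that proper initial segments have at
most `κ` elements. The transcendental elements are partitioned into layers, the `i`-th consisting
of the elements algebraic over `t '' Iic i` but not over `t '' Iio i`; each has size at most `κ`.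
By the exchange property, choosing one element from every layer always gives a transcendence basis,
so enumerating all layers simultaneously by `κ` indices covers the transcendental elements by `κ`
transcendence bases.

Conversely, `κ` transcendence bases covering the transcendental elements, together with the at most
`κ` singletons of algebraic elements, cover `A` by `κ` multiplicative Sidon sets. If `#A > κ⁺`, the
pigeonhole principle, applied to the multiplication table of `κ⁺` elements against all elements,
finds `x₁ ≠ x₂` and `y ≠ z` with `x₁ y, x₂ y, x₁ z, x₂ z` in the same Sidon set, contradicting
`(x₁ y) (x₂ z) = (x₂ y) (x₁ z)`.
-/

open Set Cardinal Order

universe u v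

section ClosureLayer

variable {α : Type u} {ι : Type v} {M : Matroid α} {t x : ι → α} {e : α}

/-- For a sequence `t` in a matroid `M`, the elements that enter the span of `t` exactly at stage
`i`: those spanned by `t` up to and including `i`, but not by the terms before `i`. -/
def closureLayer [Preorder ι] (M : Matroid α) (t : ι → α) (i : ι) : Set α :=
  M.closure (t '' Iic i) \ M.closure (t '' Iio i)

theorem mem_closureLayer_self [Preorder ι] (ht : Function.Injective t) (hind : M.Indep (range t))
    (i : ι) : t i ∈ closureLayer M t i := by
  refine ⟨M.mem_closure_of_mem' (mem_image_of_mem t self_mem_Iic)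
    (hind.subset_ground (mem_range_self i)), fun hmem ↦ ?_⟩
  refine hind.notMem_closure_sdiff_of_mem (mem_range_self i) (M.closure_subset_closure ?_ hmem)
  rintro _ ⟨j, hj, rfl⟩
  exact ⟨mem_range_self j, fun h ↦ hj.ne (ht h)⟩

variable [LinearOrder ι]

theorem indep_image_finset_of_mem_closureLayer (hx : ∀ i, x i ∈ closureLayer M t i)
    (s : Finset ι) : M.Indep (x '' s) := by
  classical
  induction s using Finset.induction_on_max with
  | empty => simp
  | insert a s hs ih =>
    have image_subset : x '' s ⊆ M.closure (t '' Iio a) := by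
      rintro _ ⟨j, hj, rfl⟩
      exact M.closure_subset_closure (image_mono (Iic_subset_Iio.2 (hs j hj))) (hx j).1
    rw [Finset.coe_insert, image_insert_eq]
    refine ih.insert_indep_iff.2 (.inl ⟨M.mem_ground_of_mem_closure (hx a).1, fun ha ↦ ?_⟩)
    exact (hx a).2 (M.closure_subset_closure_of_subset_closure image_subset ha)

theorem indep_range_of_mem_closureLayer [M.Finitary] (hx : ∀ i, x i ∈ closureLayer M t i) :
    M.Indep (range x) := by
  refine Matroid.indep_of_forall_finite_subset_indep _ fun J hJ hfin ↦ ?_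
  rw [← image_univ] at hJ
  obtain ⟨s, -, hs, rfl⟩ := exists_subset_image_finite_and.1 ⟨J, hJ, hfin, rfl⟩
  simpa using indep_image_finset_of_mem_closureLayer hx hs.toFinset

theorem mem_closure_range_of_mem_closureLayer [WellFoundedLT ι]
    (hx : ∀ i, x i ∈ closureLayer M t i) (i : ι) : t i ∈ M.closure (range x) := by
  induction i using WellFoundedLT.induction with
  | _ i ih =>
    have hxi : x i ∈ M.closure (insert (t i) (t '' Iio i)) \ M.closure (t '' Iio i) := by
      rw [← image_insert_eq, Iio_insert]
      exact hx i
    have exchange : t i ∈ M.closure (insert (x i) (t '' Iio i)) := (M.closure_exchange hxi).1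
    refine M.closure_subset_closure_of_subset_closure ?_ exchange
    rintro _ (rfl | ⟨j, hj, rfl⟩)
    · exact M.mem_closure_of_mem' (mem_range_self i) (M.mem_ground_of_mem_closure hxi.1)
    · exact ih j hj

theorem isBase_range_of_mem_closureLayer [WellFoundedLT ι] [M.Finitary]
    (ht : M.Spanning (range t)) (hx : ∀ i, x i ∈ closureLayer M t i) : M.IsBase (range x) := by
  refine (indep_range_of_mem_closureLayer hx).isBase_of_ground_subset_closure ?_
  rw [← ht.closure_eq]
  exact M.closure_subset_closure_of_subset_closure
    (range_subset_iff.2 (mem_closure_range_of_mem_closureLayer hx))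

theorem exists_mem_closure_image_Iic [M.Finitary] {S : Set ι} (he : M.IsNonloop e)
    (hS : e ∈ M.closure (t '' S)) : ∃ i ∈ S, e ∈ M.closure (t '' Iic i) := by
  obtain ⟨I, hIS, hfin, -, heI⟩ := M.exists_mem_finite_closure_of_mem_closure hS
  obtain ⟨s, hsS, hs, hes⟩ := exists_subset_image_finite_and (p := (e ∈ M.closure ·)).1
    ⟨I, hIS, hfin, heI⟩
  have hne : s.Nonempty := by
    rw [nonempty_iff_ne_empty]
    rintro rfl
    rw [image_empty] at hes
    exact he.not_isLoop hes
  obtain ⟨i, hi, hmax⟩ := exists_max_image s id hs hne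
  exact ⟨i, hsS hi, M.closure_subset_closure (image_mono hmax) hes⟩

theorem iUnion_closureLayer [WellFoundedLT ι] [M.Finitary] (ht : M.Spanning (range t)) :
    ⋃ i, closureLayer M t i = {e | M.IsNonloop e} := by
  ext e
  rw [mem_iUnion]
  refine ⟨fun ⟨i, hi⟩ ↦ ⟨?_, M.mem_ground_of_mem_closure hi.1⟩, fun he : M.IsNonloop e ↦ ?_⟩
  · exact fun hloop ↦ hi.2 (M.closure_subset_closure (empty_subset _) hloop)
  · have he_range : e ∈ M.closure (t '' univ) := by
      rw [image_univ, ht.closure_eq]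
      exact he.mem_ground
    obtain ⟨j, -, hj⟩ := exists_mem_closure_image_Iic he he_range
    obtain ⟨i, hi, hmin⟩ :=
      wellFounded_lt.has_min {i | e ∈ M.closure (t '' Iic i)} ⟨j, hj⟩
    refine ⟨i, hi, fun hlt ↦ ?_⟩
    obtain ⟨k, hki, hk⟩ := exists_mem_closure_image_Iic he hlt
    exact hmin k hk hki

end ClosureLayer

section MatroidCover

variable {α J : Type u}

theorem exists_range_eq_of_mk_le {s : Set α} (hne : s.Nonempty) (hs : #s ≤ #J) :
    ∃ f : J → α, range f = s := by
  have := hne.to_subtype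
  obtain ⟨g⟩ := hs
  refine ⟨Subtype.val ∘ Function.invFun g, ?_⟩
  rw [(Function.invFun_surjective g.injective).range_comp, Subtype.range_coe]

theorem exists_isBase_iUnion_eq_isNonloop [Infinite J] (M : Matroid α) [M.Finitary]
    (hrank : M.cRank ≤ succ #J) (hclosure : ∀ X : Set α, #X ≤ #J → #(M.closure X) ≤ #J) :
    ∃ B : J → Set α, (∀ j, M.IsBase (B j)) ∧ {e | M.IsNonloop e} = ⋃ j, B j := by
  obtain ⟨T, hT⟩ := M.exists_isBase
  obtain ⟨_, _, hord⟩ := exists_ord_eq_type_lt T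
  let t : T → α := Subtype.val
  have hbase : M.IsBase (range t) := by rwa [Subtype.range_coe]
  have mk_Iic_le (i : T) : #(Iic i) ≤ #J := by
    have mk_Iio_le : #(Iio i) ≤ #J :=
      lt_succ_iff.1 ((mk_Iio_lt i hord).trans_le (hT.cardinalMk_le_cRank.trans hrank))
    rw [← Iio_insert]
    exact mk_insert_le.trans (add_le_of_le (aleph0_le_mk J) mk_Iio_le
      (one_le_aleph0.trans (aleph0_le_mk J)))
  have mk_layer_le (i : T) : #(closureLayer M t i) ≤ #J :=
    (mk_le_mk_of_subset sdiff_subset).trans (hclosure _ (mk_image_le.trans (mk_Iic_le i)))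
  have layer_nonempty (i : T) : (closureLayer M t i).Nonempty :=
    ⟨t i, mem_closureLayer_self Subtype.val_injective hbase.indep i⟩
  choose f range_f using fun i ↦ exists_range_eq_of_mk_le (layer_nonempty i) (mk_layer_le i)
  refine ⟨fun j ↦ range fun i ↦ f i j, fun j ↦ ?_, ?_⟩
  · exact isBase_range_of_mem_closureLayer hbase.spanning fun i ↦ range_f i ▸ mem_range_self j
  · rw [← iUnion_closureLayer hbase.spanning]
    simp_rw [← range_f, ← iUnion_singleton_eq_range]
    exact iUnion_comm _

end MatroidCover

section Sidon

theorem exists_monochromatic_rectangle {X Y C : Type u} [Infinite X] (c : X → Y → C)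
    (hCX : #C < #X) (hXY : #X < #Y) :
    ∃ x₁ x₂ y z, x₁ ≠ x₂ ∧ y ≠ z ∧ c x₂ y = c x₁ y ∧ c x₁ z = c x₁ y ∧ c x₂ z = c x₁ y := by
  have exists_collision (y : Y) : ∃ x₁ x₂, c x₁ y = c x₂ y ∧ x₁ ≠ x₂ :=
    Function.not_injective_iff.1 fun h ↦ hCX.not_ge (mk_le_of_injective h)
  choose p q hpq hne using exists_collision
  have mk_triples_lt : #(X × X × C) < #Y :=
    calc #(X × X × C) = #X * (#X * #C) := by simp only [mk_prod, lift_id]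
      _ ≤ #X := mul_le_of_le (aleph0_le_mk X) le_rfl
        (mul_le_of_le (aleph0_le_mk X) le_rfl hCX.le)
      _ < #Y := hXY
  obtain ⟨y, z, hyz, y_ne_z⟩ := Function.not_injective_iff.1
    fun h : Function.Injective fun y ↦ (p y, q y, c (p y) y) ↦
      mk_triples_lt.not_ge (mk_le_of_injective h)
  simp only [Prod.mk.injEq] at hyz
  obtain ⟨hp, hq, hc⟩ := hyz
  refine ⟨p y, q y, y, z, hne y, y_ne_z, (hpq y).symm, ?_, ?_⟩
  · rw [hc, hp]
  · rw [hc, hq, hpq z]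

/-- Multiplicative Sidon sets: the equation `a * d = b * c` has only the solutions with
`a = b` or `a = c`. If multiplication is commutative and cancellative, the other two variables then
agree as well. -/
def IsMulSidon {S : Type*} [Mul S] (s : Set S) : Prop :=
  ∀ ⦃a⦄, a ∈ s → ∀ ⦃b⦄, b ∈ s → ∀ ⦃c⦄, c ∈ s → ∀ ⦃d⦄, d ∈ s → a * d = b * c → a = b ∨ a = c

theorem isMulSidon_singleton {S : Type*} [Mul S] (a : S) : IsMulSidon {a} :=
  fun _ hb _ hc _ _ _ _ _ ↦ .inl (hb.trans hc.symm)

theorem mk_le_succ_of_iUnion_isMulSidon {S J : Type u} [CommMonoidWithZero S] [IsCancelMulZero S]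
    [Infinite J] {B : J → Set S} (hB : ∀ j, IsMulSidon (B j)) (hcover : ⋃ j, B j = Set.univ) :
    #S ≤ succ #J := by
  by_contra! hlt
  have aleph0_le_succ : ℵ₀ ≤ succ #J := (aleph0_le_mk J).trans (le_succ _)
  have : Infinite S := infinite_iff.2 (aleph0_le_succ.trans hlt.le)
  have mk_nonzero : #({0}ᶜ : Set S) = #S :=
    mk_compl_of_infinite _ (by simpa using one_lt_aleph0.trans_le (aleph0_le_mk S))
  obtain ⟨X, hX0, hX⟩ := le_mk_iff_exists_subset.1 (mk_nonzero ▸ hlt.le)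
  have : Infinite X := infinite_iff.2 (hX ▸ aleph0_le_succ)
  choose colour mem_colour using fun s : S ↦ mem_iUnion.1 (hcover ▸ mem_univ s)
  obtain ⟨x₁, x₂, y, z, hx, hyz, hcolour₂y, hcolour₁z, hcolour₂z⟩ := exists_monochromatic_rectangle
    (fun (x : X) (y : ({0}ᶜ : Set S)) ↦ colour (x * y))
    (hX ▸ lt_succ _) (by rwa [hX, mk_nonzero])
  have mul_eq_mul : (x₁ * y : S) * (x₂ * z) = (x₂ * y) * (x₁ * z) := by
    ac_rfl
  have mem₂y : (x₂ * y : S) ∈ B (colour (x₁ * y)) := hcolour₂y ▸ mem_colour _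
  have mem₁z : (x₁ * z : S) ∈ B (colour (x₁ * y)) := hcolour₁z ▸ mem_colour _
  have mem₂z : (x₂ * z : S) ∈ B (colour (x₁ * y)) := hcolour₂z ▸ mem_colour _
  rcases hB _ (mem_colour _) mem₂y mem₁z mem₂z mul_eq_mul with hab | hac
  · exact hx (Subtype.ext (mul_right_cancel₀ y.2 hab))
  · exact hyz (Subtype.ext (mul_left_cancel₀ (hX0 x₁.2) hac))

theorem isMulSidon_range_of_algebraicIndependent {R A ι : Type*} [CommRing R] [CommRing A]
    [Algebra R A] [Nontrivial R] {x : ι → A} (hx : AlgebraicIndependent R x) :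
    IsMulSidon (range x) := by
  rintro _ ⟨i, rfl⟩ _ ⟨j, rfl⟩ _ ⟨k, rfl⟩ _ ⟨l, rfl⟩ h
  have hX : (MvPolynomial.X i * MvPolynomial.X l : MvPolynomial ι R) =
      MvPolynomial.X j * MvPolynomial.X k := hx (by simpa using h)
  have exponents_eq : Finsupp.single i 1 + Finsupp.single l 1 =
      Finsupp.single j 1 + Finsupp.single k 1 :=
    MvPolynomial.monomial_left_injective (one_ne_zero (α := R))
      (by simpa [MvPolynomial.X, MvPolynomial.monomial_mul] using hX)
  rcases (Finsupp.single_add_single_eq_single_add_single one_ne_zero one_ne_zero).1 exponents_eq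
    with ⟨hij, -⟩ | ⟨-, hik, -⟩ | ⟨htwo, -⟩
  · exact .inl (congrArg x hij)
  · exact .inr (congrArg x hik)
  · exact absurd htwo two_ne_zero

end Sidon

section Transcendence

theorem algebraicIndependent_matroid_isNonloop_iff {R A : Type*} [CommRing R] [CommRing A]
    [Algebra R A] [IsDomain A] [FaithfulSMul R A] {a : A} :
    (AlgebraicIndependent.matroid R A).IsNonloop a ↔ Transcendental R a := by
  rw [← Matroid.indep_singleton, AlgebraicIndependent.matroid_indep_iff]
  exact algebraicIndependent_unique_type_iff

variable {R A J : Type u} [CommRing R] [CommRing A] [Algebra R A]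
  [IsDomain A] [FaithfulSMul R A]

theorem mk_algebraicIndependent_matroid_closure_le [Infinite J] (hR : #R ≤ #J) {s : Set A}
    (hs : #s ≤ #J) : #((AlgebraicIndependent.matroid R A).closure s) ≤ #J := by
  have mk_adjoin_le : #(Algebra.adjoin R s) ≤ #J :=
    (Algebra.cardinalMk_adjoin_le R s).trans (max_le (max_le hR hs) (aleph0_le_mk J))
  rw [AlgebraicIndependent.matroid_closure_eq]
  exact (Algebraic.cardinalMk_le_max (Algebra.adjoin R s) A).trans
    (max_le mk_adjoin_le (aleph0_le_mk J))

theorem exists_isTranscendenceBasis_iUnion_eq_transcendental [Infinite J] (hR : #R ≤ #J)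
    (hA : #A ≤ succ #J) :
    ∃ B : J → Set A, (∀ j, IsTranscendenceBasis R (fun x : B j ↦ (x : A))) ∧
      {a : A | Transcendental R a} = ⋃ j, B j := by
  have hrank : (AlgebraicIndependent.matroid R A).cRank ≤ succ #J :=
    Matroid.cRank_le_iff.2 fun T _ ↦ (mk_set_le T).trans hA
  simpa only [algebraicIndependent_matroid_isNonloop_iff,
    AlgebraicIndependent.matroid_isBase_iff] using
    exists_isBase_iUnion_eq_isNonloop (AlgebraicIndependent.matroid R A) hrank
      fun _ ↦ mk_algebraicIndependent_matroid_closure_le hR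

theorem mk_le_succ_of_transcendental_subset_iUnion [Infinite J] (hR : #R ≤ #J) {B : J → Set A}
    (hB : ∀ j, AlgebraicIndependent R (fun x : B j ↦ (x : A)))
    (hcover : {a : A | Transcendental R a} ⊆ ⋃ j, B j) : #A ≤ succ #J := by
  have : Nontrivial R := (algebraMap R A).domain_nontrivial
  let Alg := (AlgebraicIndependent.matroid R A).loops
  let cover : J ⊕ Alg → Set A := Sum.elim B fun a ↦ {(a : A)}
  have mk_index : #(J ⊕ Alg) = #J := by
    have mk_Alg_le : #Alg ≤ #J := mk_algebraicIndependent_matroid_closure_le hR (by simp)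
    rw [mk_sum, lift_id, lift_id, add_eq_left (aleph0_le_mk J) mk_Alg_le]
  have cover_isMulSidon : ∀ i, IsMulSidon (cover i)
    | .inl j => by simpa [cover] using isMulSidon_range_of_algebraicIndependent (hB j)
    | .inr a => isMulSidon_singleton (a : A)
  have iUnion_cover : ⋃ i, cover i = Set.univ := by
    refine eq_univ_of_forall fun a ↦ ?_
    by_cases ha : Transcendental R a
    · obtain ⟨j, hj⟩ := mem_iUnion.1 (hcover ha)
      exact mem_iUnion.2 ⟨.inl j, hj⟩
    · rw [← algebraicIndependent_matroid_isNonloop_iff,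
        Matroid.not_isNonloop_iff (mem_univ a)] at ha
      exact mem_iUnion.2 ⟨.inr ⟨a, ha⟩, rfl⟩
  exact mk_index ▸ mk_le_succ_of_iUnion_isMulSidon cover_isMulSidon iUnion_cover

theorem ch_iff_transcendentals_union_of_transcendence_bases_general [Infinite J]
    (hR : #R ≤ #J) :
    #A ≤ succ #J ↔
      ∃ B : J → Set A, (∀ j, IsTranscendenceBasis R (fun x : B j ↦ (x : A))) ∧
        {a : A | Transcendental R a} = ⋃ j, B j :=
  ⟨exists_isTranscendenceBasis_iUnion_eq_transcendental hR, fun ⟨_, hB, hcover⟩ ↦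
    mk_le_succ_of_transcendental_subset_iUnion hR (fun j ↦ (hB j).1) hcover.subset⟩

end Transcendence

theorem continuum_eq_aleph_one_iff_mk_real_le :
    Cardinal.continuum.{u} = Cardinal.aleph 1 ↔ #ℝ ≤ succ #ℕ := by
  rw [mk_real, mk_nat, succ_aleph0, ← aleph_one_le_continuum.ge_iff_eq',
    ← lift_le.{u} (a := continuum.{0}), lift_continuum, lift_aleph, Ordinal.lift_one]

/-- The Continuum Hypothesis holds if and only if the set of all real numbers that are
transcendental over `ℚ` can be written as the union of countably many transcendence bases
of `ℝ` over `ℚ`. -/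
theorem ch_iff_transcendentals_union_of_transcendence_bases :
    Cardinal.continuum = Cardinal.aleph 1 ↔
      ∃ B : ℕ → Set ℝ,
        (∀ n, IsTranscendenceBasis ℚ (fun x : B n => (x : ℝ))) ∧
        {x : ℝ | Transcendental ℚ x} = ⋃ n, B n :=
  continuum_eq_aleph_one_iff_mk_real_le.trans <|
    ch_iff_transcendentals_union_of_transcendence_bases_general (by simp)
end

section
/- Assume the Continuum Hypothesis. Let H be an infinite-dimensional separable complex Hilbert space and let B(H) be the algebra of bounded linear operators on H. Then there exists a pure state φ on B(H) such that for every maximal abelian self-adjoint subalgebra A of B(H), the restriction of φ to A is not a pure state of A. -/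
/-- A state on a unital complex star algebra: a positive linear functional sending `1` to `1`.
Positivity means that `φ (star a * a)` is a nonnegative real number for every `a`. -/
def IsState {M : Type*} [Ring M] [StarRing M] [Algebra ℂ M] (φ : M →ₗ[ℂ] ℂ) : Prop :=
  (∀ a : M, 0 ≤ (φ (star a * a)).re ∧ (φ (star a * a)).im = 0) ∧ φ 1 = 1

/-- A pure state: a state which is an extreme point of the set of states, i.e. it cannot be
written as a nontrivial convex combination of two distinct states. -/
def IsPureState {M : Type*} [Ring M] [StarRing M] [Algebra ℂ M] (φ : M →ₗ[ℂ] ℂ) : Prop :=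
  IsState φ ∧ ∀ (ψ₁ ψ₂ : M →ₗ[ℂ] ℂ) (t : ℝ), IsState ψ₁ → IsState ψ₂ →
    0 < t → t < 1 → φ = (t : ℂ) • ψ₁ + ((1 - t : ℝ) : ℂ) • ψ₂ → ψ₁ = ψ₂

/-!
States obtained as limits of vector states `a ↦ ⟪v, a v⟫` along a filter of unit vectors are
controlled by the closed subspaces that eventually contain the vectors. Order the closed
infinite-dimensional subspaces by inclusion up to finite dimension. Every countable chain has a
lower bound, and any subspace can be shrunk to one on which a given operator is within `ε` of a
scalar. Under the Continuum Hypothesis there are only `ℵ₁` operators, so a transfinite recursion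
yields a chain that decides all of them; the corresponding limit state exists, and it is pure
because every state with value `1` on the projections onto the members of the chain agrees with it.

Suppose that its restriction to a masa `A` is pure, hence multiplicative. The state vanishes on
rank-one operators, so the kernel of the restriction has trivial common null space, and by
separability `A` contains an injective `0 ≤ h ≤ 1` with `φ h = 0`. Along the chain `h` is then not
bounded below. For such an `h` a suitable strong sum `S` of differences of powers of `1 - h` lies
in the bicommutant of `h`, therefore in `A`, and is close to `1` on one and to `0` on the other of
two orthonormal sequences inside any given member of the chain. On the closed span of the
normalised sums of their terms the variance of `S` is at least `1 / 8`. The chain can be chosen to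
pass through such spans, which contradicts multiplicativity at `S`.
-/

open scoped ComplexOrder InnerProductSpace
open ComplexStarModule Filter Topology

/-! ### States -/

section States

variable {M : Type*} [Ring M] [StarRing M] [Algebra ℂ M] {φ : M →ₗ[ℂ] ℂ}

theorem IsState.map_one (hφ : IsState φ) : φ 1 = 1 := hφ.2

theorem IsState.map_star_mul_self_nonneg (hφ : IsState φ) (a : M) : 0 ≤ φ (star a * a) :=
  Complex.nonneg_iff.2 ⟨(hφ.1 a).1, (hφ.1 a).2.symm⟩

theorem IsState.im_map_of_isSelfAdjoint (hφ : IsState φ) {a : M} (ha : IsSelfAdjoint a) :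
    (φ a).im = 0 := by
  have polarization : (4 : ℂ) * φ a =
      φ (star (1 + a) * (1 + a)) - φ (star (1 - a) * (1 - a)) := by
    rw [← smul_eq_mul, ← map_smul, ← map_sub, star_add, star_sub, star_one, ha.star_eq]
    congr 1
    rw [← Nat.cast_ofNat, Nat.cast_smul_eq_nsmul]
    noncomm_ring
  have him := congrArg Complex.im polarization
  rw [Complex.sub_im, (hφ.1 _).2, (hφ.1 _).2] at him
  simpa using him

theorem IsState.re_map_le_one_of_isStarProjection (hφ : IsState φ) {p : M}
    (hp : IsStarProjection p) : (φ p).re ≤ 1 := by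
  have h := (hφ.1 (1 - p)).1
  rw [hp.one_sub.isSelfAdjoint.star_eq, hp.one_sub.isIdempotentElem.eq, map_sub, hφ.map_one] at h
  simpa using h

theorem IsState.map_eq_one_of_convex_combination {ψ₁ ψ₂ : M →ₗ[ℂ] ℂ} (hψ₁ : IsState ψ₁)
    (hψ₂ : IsState ψ₂) {t : ℝ} (ht0 : 0 < t) (ht1 : t < 1) {p : M} (hp : IsStarProjection p)
    (h : t * ψ₁ p + (1 - t : ℝ) * ψ₂ p = 1) : ψ₁ p = 1 ∧ ψ₂ p = 1 := by
  have hre := congrArg Complex.re h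
  simp only [Complex.add_re, Complex.re_ofReal_mul, Complex.one_re] at hre
  have hle₁ := hψ₁.re_map_le_one_of_isStarProjection hp
  have hle₂ := hψ₂.re_map_le_one_of_isStarProjection hp
  constructor <;> refine Complex.ext ?_ ?_
  · rw [Complex.one_re]
    nlinarith
  · exact hψ₁.im_map_of_isSelfAdjoint hp.isSelfAdjoint
  · rw [Complex.one_re]
    nlinarith
  · exact hψ₂.im_map_of_isSelfAdjoint hp.isSelfAdjoint

variable [StarModule ℂ M]

theorem IsState.map_star (hφ : IsState φ) (a : M) : φ (star a) = star (φ a) := by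
  have hre := hφ.im_map_of_isSelfAdjoint (ℜ a).2
  have him := hφ.im_map_of_isSelfAdjoint (ℑ a).2
  rw [← realPart_add_I_smul_imaginaryPart a]
  apply Complex.ext <;> simp [hre, him]

theorem IsState.map_star_mul_eq_zero (hφ : IsState φ) {q : M} (hq : φ (star q * q) = 0) (x : M) :
    φ (star q * x) = 0 := by
  set α := φ (star q * x) with hα
  have hα' : φ (star x * q) = star α := by rw [← hφ.map_star, star_mul, star_star]
  have hbound (s : ℝ) : 0 ≤ (φ (star x * x)).re - s * (2 * Complex.normSq α) := by
    have h := (hφ.1 (x - (s * α) • q)).1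
    have hexp : φ (star (x - (s * α) • q) * (x - (s * α) • q)) =
        φ (star x * x) - s * (2 * (α * star α)) := by
      simp only [star_sub, star_smul, sub_mul, mul_sub, smul_mul_assoc, mul_smul_comm, map_sub,
        map_smul, smul_eq_mul, hq, hα', ← hα, star_mul', RCLike.star_def, Complex.conj_ofReal]
      ring
    rw [hexp, RCLike.star_def, Complex.mul_conj] at h
    exact_mod_cast h
  have hzero : Complex.normSq α = 0 := by
    by_contra hne
    have h := hbound (((φ (star x * x)).re + 1) / (2 * Complex.normSq α))
    rw [div_mul_cancel₀ _ (by simpa using hne)] at h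
    linarith
  exact Complex.normSq_eq_zero.1 hzero

theorem IsState.map_mul_eq_zero (hφ : IsState φ) {q : M} (hq : φ (star q * q) = 0) (x : M) :
    φ (x * q) = 0 := by
  have h := hφ.map_star_mul_eq_zero hq (star x)
  rwa [← star_mul, hφ.map_star, star_eq_zero] at h

theorem IsState.map_compress (hφ : IsState φ) {p : M} (hp : IsStarProjection p) (h1 : φ p = 1)
    (a : M) : φ (p * a * p) = φ a := by
  have hq : φ (star (1 - p) * (1 - p)) = 0 := by
    rw [hp.one_sub.isSelfAdjoint.star_eq, hp.one_sub.isIdempotentElem.eq, map_sub, h1,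
      hφ.map_one, sub_self]
  have hleft := hφ.map_star_mul_eq_zero hq (a * p)
  have hright := hφ.map_mul_eq_zero hq a
  rw [hp.one_sub.isSelfAdjoint.star_eq, sub_mul, one_mul, map_sub, sub_eq_zero] at hleft
  rw [mul_sub, mul_one, map_sub, sub_eq_zero] at hright
  rw [mul_assoc, ← hleft, hright]

theorem IsState.ext_of_isSelfAdjoint {ψ : M →ₗ[ℂ] ℂ} (hφ : IsState φ) (hψ : IsState ψ)
    (h : ∀ a : M, IsSelfAdjoint a → (φ a).re = (ψ a).re) : φ = ψ := by
  have hsa (a : M) (ha : IsSelfAdjoint a) : φ a = ψ a :=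
    Complex.ext (h a ha) <| by
      rw [hφ.im_map_of_isSelfAdjoint ha, hψ.im_map_of_isSelfAdjoint ha]
  ext a
  rw [← realPart_add_I_smul_imaginaryPart a, map_add, map_add, map_smul, map_smul,
    hsa _ (ℜ a).2, hsa _ (ℑ a).2]

end States

section PureStates

variable {M : Type*} [CommRing M] [StarRing M] [Algebra ℂ M] {φ : M →ₗ[ℂ] ℂ}

theorem IsState.inv_smul_comp_mulLeft (hφ : IsState φ) (x : M) {t : ℝ} (ht : 0 < t)
    (hx : φ (star x * x) = t) :
    IsState (((t⁻¹ : ℝ) : ℂ) • φ.comp (LinearMap.mulLeft ℂ (star x * x))) := by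
  refine ⟨fun b ↦ ?_, ?_⟩
  · have hmul : star x * x * (star b * b) = star (x * b) * (x * b) := by
      rw [star_mul]
      ring
    have hpos := hφ.1 (x * b)
    simp only [LinearMap.smul_apply, LinearMap.comp_apply, LinearMap.mulLeft_apply, hmul,
      smul_eq_mul, Complex.re_ofReal_mul, Complex.im_ofReal_mul, hpos.2, mul_zero, and_true]
    exact mul_nonneg (inv_nonneg.2 ht.le) hpos.1
  · have ht' : (t : ℂ) ≠ 0 := by exact_mod_cast ht.ne'
    simp [hx, ht']

variable [StarModule ℂ M]

-- With `c = star x * x`, `φ` is the average, with weights `φ c` and `1 - φ c`, of the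
-- normalisations of `φ (c * ·)` and `φ ((1 - c) * ·)`, so by purity these two states agree.
theorem IsPureState.map_star_mul_self_mul (hφ : IsPureState φ) {x y : M}
    (hxy : star x * x + star y * y = 1) (a : M) :
    φ (star x * x * a) = φ (star x * x) * φ a := by
  obtain ⟨hs, hp⟩ := hφ
  have hsum (b : M) : φ (star x * x * b) + φ (star y * y * b) = φ b := by
    rw [← map_add, ← add_mul, hxy, one_mul]
  have hsum_one : φ (star x * x) + φ (star y * y) = 1 := by rw [← map_add, hxy, hs.map_one]
  obtain ⟨t, ht0, ht : (t : ℂ) = _⟩ :=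
    RCLike.nonneg_iff_exists_ofReal.1 (hs.map_star_mul_self_nonneg x)
  obtain ⟨s, hs0, hs' : (s : ℂ) = _⟩ :=
    RCLike.nonneg_iff_exists_ofReal.1 (hs.map_star_mul_self_nonneg y)
  obtain rfl : s = 1 - t := by
    rw [← ht, ← hs', ← Complex.ofReal_add] at hsum_one
    linarith [Complex.ofReal_eq_one.1 hsum_one]
  rcases ht0.eq_or_lt with rfl | htpos
  · rw [mul_assoc, hs.map_star_mul_eq_zero (by simpa using ht.symm), ← ht]
    simp
  rcases hs0.eq_or_lt with hseq | hspos
  · have hy : φ (star y * y * a) = 0 := by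
      rw [mul_assoc, hs.map_star_mul_eq_zero]
      rw [← hs', ← hseq, Complex.ofReal_zero]
    rw [← hsum a, hy, add_zero, ← ht, show t = 1 by linarith, Complex.ofReal_one, one_mul]
  have ht' : (t : ℂ) ≠ 0 := by exact_mod_cast htpos.ne'
  have hs'' : ((1 - t : ℝ) : ℂ) ≠ 0 := by exact_mod_cast hspos.ne'
  have hstates := hp _ _ t (hs.inv_smul_comp_mulLeft x htpos ht.symm)
    (hs.inv_smul_comp_mulLeft y hspos hs'.symm) htpos (by linarith) <| by
      ext b
      simp [ht', hs'', ← hsum b, mul_assoc, -Complex.ofReal_sub]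
  have happly := LinearMap.congr_fun hstates a
  simp only [LinearMap.smul_apply, LinearMap.comp_apply, LinearMap.mulLeft_apply, smul_eq_mul,
    Complex.ofReal_inv] at happly
  rw [inv_mul_eq_div, inv_mul_eq_div, div_eq_div_iff ht' hs'',
    eq_sub_of_add_eq' (hsum a)] at happly
  rw [← ht]
  push_cast at happly
  linear_combination happly

end PureStates

theorem IsPureState.map_mul {M : Type*} [CommCStarAlgebra M] {φ : M →ₗ[ℂ] ℂ} (hφ : IsPureState φ)
    (a b : M) : φ (a * b) = φ a * φ b := by
  let := CStarAlgebra.spectralOrder M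
  have := CStarAlgebra.spectralOrderedRing M
  have ha : a ∈ Submodule.span ℂ ({c : M | 0 ≤ c} ∩ Metric.closedBall 0 1) := by
    rw [CStarAlgebra.span_nonneg_inter_unitClosedBall]
    trivial
  induction ha using Submodule.span_induction with
  | mem c hc =>
    obtain ⟨hc0 : 0 ≤ c, hc1⟩ := hc
    have hc1 : c ≤ 1 := (CStarAlgebra.norm_le_one_iff_of_nonneg c hc0).1 (by simpa using hc1)
    obtain ⟨x, hx⟩ := CStarAlgebra.nonneg_iff_eq_star_mul_self.1 hc0
    obtain ⟨y, hy⟩ := CStarAlgebra.nonneg_iff_eq_star_mul_self.1 (sub_nonneg.2 hc1)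
    rw [hx]
    exact hφ.map_star_mul_self_mul (y := y) (by rw [← hx, ← hy, add_sub_cancel]) b
  | zero => simp
  | add c d _ _ hc hd => rw [add_mul, map_add, hc, hd, map_add, add_mul]
  | smul z c _ hc => rw [smul_mul_assoc, map_smul, hc, map_smul, smul_mul_assoc]

section CStarStates

variable {M : Type*} [CStarAlgebra M] {φ : M →ₗ[ℂ] ℂ}

variable [PartialOrder M] [StarOrderedRing M]

theorem IsState.map_nonneg (hφ : IsState φ) {a : M} (ha : 0 ≤ a) : 0 ≤ φ a := by
  obtain ⟨b, rfl⟩ := CStarAlgebra.nonneg_iff_eq_star_mul_self.1 ha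
  exact hφ.map_star_mul_self_nonneg b

theorem IsState.re_map_le (hφ : IsState φ) {a b : M} (hab : a ≤ b) : (φ a).re ≤ (φ b).re := by
  have h := hφ.map_nonneg (sub_nonneg.2 hab)
  rw [map_sub, sub_nonneg] at h
  exact (Complex.le_def.1 h).1

theorem IsState.continuous (hφ : IsState φ) : Continuous φ :=
  map_continuous (PositiveLinearMap.mk₀ φ fun _ ↦ hφ.map_nonneg)

end CStarStates

/-! ### Transfinite construction of a generic chain -/

theorem isChain_image_of_forall_lt {α ι : Type*} [LinearOrder ι] {r : α → α → Prop} {p : ι → α}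
    {s : Set ι} (h : ∀ i ∈ s, ∀ j < i, r (p i) (p j)) : IsChain r (p '' s) := by
  rintro _ ⟨i, hi, rfl⟩ _ ⟨j, hj, rfl⟩ hne
  rcases lt_trichotomy i j with hij | rfl | hij
  · exact Or.inr (h j hj i hij)
  · exact absurd rfl hne
  · exact Or.inl (h i hi j hij)

theorem exists_isChain_range_of_countable_isChain {α ι : Type*} {r : α → α → Prop}
    {D : ι → α → Prop} (hι : Cardinal.mk ι ≤ Cardinal.aleph 1)
    (hext : ∀ i, ∀ C : Set α, C.Countable → IsChain r C → ∃ x, D i x ∧ ∀ y ∈ C, r x y) :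
    ∃ p : ι → α, (∀ i, D i (p i)) ∧ IsChain r (Set.range p) := by
  rcases isEmpty_or_nonempty ι with hempty | ⟨⟨i₀⟩⟩
  · exact ⟨isEmptyElim, isEmptyElim, by simp [Set.range_eq_empty]⟩
  have : Nonempty α := ⟨(hext i₀ ∅ Set.countable_empty IsChain.empty).choose⟩
  choose! next hnext using hext
  obtain ⟨_, _, hord⟩ := Cardinal.exists_ord_eq_type_lt ι
  have countable_Iio (i : ι) : (Set.Iio i).Countable := by
    rw [← Cardinal.le_aleph0_iff_set_countable, ← Order.lt_succ_iff, Cardinal.succ_aleph0]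
    exact (Cardinal.mk_Iio_lt i hord).trans_le hι
  let p : ι → α := (wellFounded_lt (α := ι)).fix fun i f ↦
    next i (Set.range fun j : Set.Iio i ↦ f j j.2)
  have hp (i : ι) : p i = next i (p '' Set.Iio i) := by
    rw [Set.image_eq_range]
    exact WellFounded.fix_eq _ _ _
  have hlt (i : ι) : D i (p i) ∧ ∀ j < i, r (p i) (p j) := by
    induction i using WellFoundedLT.induction with
    | _ i ih =>
      rw [hp]
      obtain ⟨hD, hr⟩ := hnext i _ ((countable_Iio i).image p)
        (isChain_image_of_forall_lt fun j hj ↦ (ih j hj).2)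
      exact ⟨hD, fun j hj ↦ hr _ (Set.mem_image_of_mem p hj)⟩
  refine ⟨p, fun i ↦ (hlt i).1, ?_⟩
  rw [← Set.image_univ]
  exact isChain_image_of_forall_lt fun i _ ↦ (hlt i).2

/-! ### Closed subspaces modulo finite-dimensional ones -/

section Geometry

variable {𝕜 E : Type*} [RCLike 𝕜] [NormedAddCommGroup E] [InnerProductSpace 𝕜 E]

/-- `W` is contained in `V` up to a finite-dimensional error: the part of `W` orthogonal to some
finite-dimensional subspace lies in `V`. This is the order on closed subspaces along which the
generic chain decreases. -/
def AlmostLE (W V : Submodule 𝕜 E) : Prop :=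
  ∃ F : Submodule 𝕜 E, FiniteDimensional 𝕜 F ∧ W ⊓ Fᗮ ≤ V

theorem AlmostLE.of_le {W V : Submodule 𝕜 E} (h : W ≤ V) : AlmostLE W V :=
  ⟨⊥, inferInstance, inf_le_left.trans h⟩

theorem AlmostLE.exists_inf_orthogonal_le {W V : Submodule 𝕜 E} (h : AlmostLE W V)
    (F : Submodule 𝕜 E) [FiniteDimensional 𝕜 F] :
    ∃ G : Submodule 𝕜 E, FiniteDimensional 𝕜 G ∧ W ⊓ Gᗮ ≤ V ⊓ Fᗮ := by
  obtain ⟨K, _, hK⟩ := h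
  refine ⟨K ⊔ F, inferInstance, ?_⟩
  rw [← Submodule.inf_orthogonal, ← inf_assoc]
  exact inf_le_inf_right _ hK

theorem AlmostLE.trans {U V W : Submodule 𝕜 E} (hWV : AlmostLE W V) (hVU : AlmostLE V U) :
    AlmostLE W U := by
  obtain ⟨F, _, hF⟩ := hVU
  obtain ⟨G, hG, hle⟩ := hWV.exists_inf_orthogonal_le F
  exact ⟨G, hG, hle.trans hF⟩

/-- The infinite-dimensional closed subspaces, which are the forcing conditions. -/
structure IsInfiniteClosed (V : Submodule 𝕜 E) : Prop where
  isClosed : IsClosed (V : Set E)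
  not_finiteDimensional : ¬FiniteDimensional 𝕜 V

theorem exists_mem_inf_orthogonal_norm_eq_one {V : Submodule 𝕜 E}
    (hV : ¬FiniteDimensional 𝕜 V) (F : Submodule 𝕜 E) [FiniteDimensional 𝕜 F] :
    ∃ v ∈ V ⊓ Fᗮ, ‖v‖ = 1 := by
  have hne : V ⊓ Fᗮ ≠ ⊥ := by
    intro hbot
    refine hV (FiniteDimensional.of_injective
      ((F.orthogonalProjectionOnto : E →ₗ[𝕜] F).comp V.subtype) ?_)
    rw [injective_iff_map_eq_zero]
    rintro ⟨x, hx⟩ hFx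
    have hmem : x ∈ V ⊓ Fᗮ := ⟨hx, Submodule.orthogonalProjectionOnto_eq_zero_iff.1 hFx⟩
    simpa [hbot] using hmem
  obtain ⟨v, hv, hv0⟩ := Submodule.exists_mem_ne_zero_of_ne_bot hne
  exact ⟨((‖v‖⁻¹ : ℝ) : 𝕜) • v, Submodule.smul_mem _ _ hv, by simp [norm_smul, hv0]⟩

/-- The closed linear span of a family of vectors. -/
def closedSpan (𝕜 : Type*) {E ι : Type*} [RCLike 𝕜] [NormedAddCommGroup E] [InnerProductSpace 𝕜 E]
    (v : ι → E) : Submodule 𝕜 E :=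
  (Submodule.span 𝕜 (Set.range v)).topologicalClosure

section ClosedSpan

variable {ι : Type*} {v : ι → E}

theorem isClosed_closedSpan (v : ι → E) : IsClosed (closedSpan 𝕜 v : Set E) :=
  Submodule.isClosed_topologicalClosure _

theorem mem_closedSpan (v : ι → E) (i : ι) : v i ∈ closedSpan 𝕜 v :=
  Submodule.le_topologicalClosure _ (Submodule.subset_span ⟨i, rfl⟩)

theorem closedSpan_le {V : Submodule 𝕜 E} (hV : IsClosed (V : Set E)) (h : ∀ i, v i ∈ V) :
    closedSpan 𝕜 v ≤ V :=
  Submodule.topologicalClosure_minimal _ (Submodule.span_le.2 (Set.range_subset_iff.2 h)) hV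

theorem closedSpan_induction {p : E → Prop} (hp : IsClosed {x | p x})
    (h : ∀ c : ι →₀ 𝕜, p (Finsupp.linearCombination 𝕜 v c)) {w : E} (hw : w ∈ closedSpan 𝕜 v) :
    p w := by
  refine closure_minimal (fun x hx ↦ ?_) hp hw
  obtain ⟨c, rfl⟩ := Finsupp.mem_span_range_iff_exists_finsupp.1 hx
  exact h c

theorem isInfiniteClosed_closedSpan [Infinite ι] (hv : Orthonormal 𝕜 v) :
    IsInfiniteClosed (closedSpan 𝕜 v) := by
  refine ⟨isClosed_closedSpan v, fun _ ↦ ?_⟩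
  have hli : LinearIndependent 𝕜 fun i ↦ (⟨v i, mem_closedSpan v i⟩ : closedSpan 𝕜 v) :=
    LinearIndependent.of_comp (closedSpan 𝕜 v).subtype hv.linearIndependent
  have := hli.finite
  exact not_finite ι

theorem mem_orthogonal_span_iff {s : Set E} {y : E} :
    y ∈ (Submodule.span 𝕜 s)ᗮ ↔ ∀ x ∈ s, ⟪x, y⟫_𝕜 = 0 := by
  refine ⟨fun hy x hx ↦ hy x (Submodule.subset_span hx), fun h ↦ ?_⟩
  have hle : Submodule.span 𝕜 s ≤ (𝕜 ∙ y)ᗮ :=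
    Submodule.span_le.2 fun x hx ↦ Submodule.mem_orthogonal_singleton_iff_inner_left.2 (h x hx)
  exact fun x hx ↦ Submodule.mem_orthogonal_singleton_iff_inner_left.1 (hle hx)

theorem almostLE_closedSpan (hv : Orthonormal 𝕜 v) {V : Submodule 𝕜 E}
    (hV : IsClosed (V : Set E)) (h : {i | v i ∉ V}.Finite) : AlmostLE (closedSpan 𝕜 v) V := by
  set F := Submodule.span 𝕜 (v '' {i | v i ∉ V})
  have hfd : FiniteDimensional 𝕜 F := FiniteDimensional.span_of_finite 𝕜 (h.image v)
  have hproj : closedSpan 𝕜 v ≤ V.comap (Fᗮ.starProjection : E →ₗ[𝕜] E) := by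
    refine closedSpan_le (hV.preimage Fᗮ.starProjection.continuous) fun i ↦ ?_
    by_cases hi : v i ∈ V
    · have hperp : v i ∈ Fᗮ := by
        rw [mem_orthogonal_span_iff]
        rintro _ ⟨j, hj, rfl⟩
        exact hv.2 fun hji ↦ hj (hji ▸ hi)
      simpa [Submodule.starProjection_eq_self_iff.2 hperp] using hi
    · have hzero : Fᗮ.starProjection (v i) = 0 := by
        rw [Submodule.starProjection_apply_eq_zero_iff]
        exact Submodule.le_orthogonal_orthogonal _ (Submodule.subset_span ⟨i, hi, rfl⟩)
      simp [hzero]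
  refine ⟨F, hfd, fun x ⟨hx, hxF⟩ ↦ ?_⟩
  simpa [Submodule.starProjection_eq_self_iff.2 hxF] using hproj hx

theorem norm_sq_linearCombination (hv : Orthonormal 𝕜 v) (c : ι →₀ 𝕜) :
    ‖Finsupp.linearCombination 𝕜 v c‖ ^ 2 = ∑ i ∈ c.support, ‖c i‖ ^ 2 := by
  have h := hv.inner_finsupp_eq_sum_left c c
  rw [inner_self_eq_norm_sq_to_K, Finsupp.sum] at h
  simp only [RCLike.conj_mul] at h
  exact_mod_cast h

theorem norm_map_le_of_mem_closedSpan {G : Type*} [NormedAddCommGroup G] [NormedSpace 𝕜 G]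
    (hv : Orthonormal 𝕜 v) {T : E →L[𝕜] G} {ε : ι → ℝ} {η : ℝ} (hT : ∀ i, ‖T (v i)‖ ≤ ε i)
    (hη : ∀ s : Finset ι, ∑ i ∈ s, ε i ≤ η) {w : E} (hw : w ∈ closedSpan 𝕜 v) :
    ‖T w‖ ≤ η * ‖w‖ := by
  refine closedSpan_induction (p := fun w ↦ ‖T w‖ ≤ η * ‖w‖)
    (isClosed_le (by fun_prop) (by fun_prop)) (fun c ↦ ?_) hw
  set x := Finsupp.linearCombination 𝕜 v c with hx
  have hcoeff (i : ι) (hi : i ∈ c.support) : ‖c i‖ ≤ ‖x‖ := by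
    refine le_of_sq_le_sq ?_ (norm_nonneg _)
    rw [hx, norm_sq_linearCombination hv]
    exact Finset.single_le_sum (f := fun i ↦ ‖c i‖ ^ 2) (fun _ _ ↦ by positivity) hi
  calc ‖T x‖ ≤ ∑ i ∈ c.support, ‖T (c i • v i)‖ := by
        rw [hx, Finsupp.linearCombination_apply, Finsupp.sum, map_sum]
        exact norm_sum_le _ _
    _ ≤ ∑ i ∈ c.support, ε i * ‖x‖ := by
        refine Finset.sum_le_sum fun i hi ↦ ?_
        rw [map_smul, norm_smul, mul_comm]
        exact mul_le_mul (hT i) (hcoeff i hi) (norm_nonneg _) ((norm_nonneg _).trans (hT i))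
    _ ≤ η * ‖x‖ := by
        rw [← Finset.sum_mul]
        exact mul_le_mul_of_nonneg_right (hη _) (norm_nonneg _)

theorem norm_sq_map_of_mem_closedSpan {G : Type*} [NormedAddCommGroup G] [InnerProductSpace 𝕜 G]
    (hv : Orthonormal 𝕜 v) {v' : ι → G} (hv' : Orthonormal 𝕜 v') {T : E →L[𝕜] G} {r : 𝕜}
    (hT : ∀ i, T (v i) = r • v' i) {w : E} (hw : w ∈ closedSpan 𝕜 v) :
    ‖T w‖ ^ 2 = ‖r‖ ^ 2 * ‖w‖ ^ 2 := by
  refine closedSpan_induction (p := fun w ↦ ‖T w‖ ^ 2 = ‖r‖ ^ 2 * ‖w‖ ^ 2)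
    (isClosed_eq (by fun_prop) (by fun_prop)) (fun c ↦ ?_) hw
  have hTc : T (Finsupp.linearCombination 𝕜 v c) = r • Finsupp.linearCombination 𝕜 v' c := by
    simp only [Finsupp.linearCombination_apply, Finsupp.sum, map_sum, map_smul, hT,
      Finset.smul_sum, smul_comm r]
  rw [hTc, norm_smul, mul_pow, norm_sq_linearCombination hv, norm_sq_linearCombination hv']

end ClosedSpan

theorem exists_orthonormal_seq {β : Type*} {P : E → β → Prop} {R : β → β → Prop}
    (h : ∀ (F : Submodule 𝕜 E) [FiniteDimensional 𝕜 F] (s : Finset β),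
      ∃ v ∈ Fᗮ, ‖v‖ = 1 ∧ ∃ y, P v y ∧ ∀ x ∈ s, R x y) :
    ∃ (v : ℕ → E) (y : ℕ → β), Orthonormal 𝕜 v ∧ (∀ n, P (v n) (y n)) ∧
      ∀ m n, m < n → R (y m) (y n) := by
  classical
  obtain ⟨f, hf, hr⟩ := exists_seq_of_forall_finset_exists
    (fun x : E × β ↦ ‖x.1‖ = 1 ∧ P x.1 x.2) (fun x y ↦ ⟪x.1, y.1⟫_𝕜 = 0 ∧ R x.2 y.2) <| by
      intro s _
      have := FiniteDimensional.span_of_finite 𝕜 (s.image Prod.fst).finite_toSet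
      obtain ⟨v, hv, hv1, y, hP, hR⟩ := h (.span 𝕜 (s.image Prod.fst)) (s.image Prod.snd)
      refine ⟨(v, y), ⟨hv1, hP⟩, fun x hx ↦ ⟨mem_orthogonal_span_iff.1 hv _ ?_, hR _ ?_⟩⟩ <;>
        exact Finset.mem_image_of_mem _ hx
  refine ⟨fun n ↦ (f n).1, fun n ↦ (f n).2, ⟨fun n ↦ (hf n).1, fun m n hmn ↦ ?_⟩,
    fun n ↦ (hf n).2, fun m n hmn ↦ (hr m n hmn).2⟩
  rcases hmn.lt_or_gt with hlt | hlt
  · exact (hr m n hlt).1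
  · exact inner_eq_zero_symm.1 (hr n m hlt).1

theorem exists_inf_orthogonal_le_of_isChain {ι : Type*} [Nonempty ι] {V : ι → Submodule 𝕜 E}
    (hV : IsChain AlmostLE (Set.range V)) (s : Finset ι) :
    ∃ m, ∃ F : Submodule 𝕜 E, FiniteDimensional 𝕜 F ∧ ∀ i ∈ s, V m ⊓ Fᗮ ≤ V i := by
  have : Std.Refl (AlmostLE (𝕜 := 𝕜) (E := E)) := ⟨fun _ ↦ .of_le le_rfl⟩
  have : IsTrans (Submodule 𝕜 E) (flip AlmostLE) := ⟨fun _ _ _ hVU hWV ↦ hWV.trans hVU⟩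
  have hdir : Directed (flip AlmostLE) V := fun i j ↦ by
    rcases hV.total ⟨i, rfl⟩ ⟨j, rfl⟩ with hij | hji
    · exact ⟨i, .of_le le_rfl, hij⟩
    · exact ⟨j, hji, .of_le le_rfl⟩
  obtain ⟨m, hm⟩ := hdir.finset_le s
  choose! F hfd hF using hm
  have (i : s) : FiniteDimensional 𝕜 (F i) := hfd i i.2
  refine ⟨m, ⨆ i : s, F i, inferInstance, fun i hi ↦ le_trans ?_ (hF i hi)⟩
  exact inf_le_inf_left _ (Submodule.orthogonal_le (le_iSup (fun i : s ↦ F i) ⟨i, hi⟩))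

theorem exists_norm_eq_one_mem_of_isChain {ι : Type*} [Nonempty ι] {V : ι → Submodule 𝕜 E}
    (hinf : ∀ i, ¬FiniteDimensional 𝕜 (V i)) (hV : IsChain AlmostLE (Set.range V)) (s : Finset ι)
    (F : Submodule 𝕜 E) [FiniteDimensional 𝕜 F] : ∃ v ∈ Fᗮ, ‖v‖ = 1 ∧ ∀ i ∈ s, v ∈ V i := by
  obtain ⟨m, G, _, hG⟩ := exists_inf_orthogonal_le_of_isChain hV s
  obtain ⟨v, ⟨hvm, hvFG⟩, hv1⟩ := exists_mem_inf_orthogonal_norm_eq_one (hinf m) (F ⊔ G)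
  rw [SetLike.mem_coe, ← Submodule.inf_orthogonal] at hvFG
  exact ⟨v, hvFG.1, hv1, fun i hi ↦ hG i hi ⟨hvm, hvFG.2⟩⟩

theorem exists_isInfiniteClosed_almostLE_of_seq {V : ℕ → Submodule 𝕜 E}
    (hV : ∀ n, IsInfiniteClosed (V n)) (hchain : IsChain AlmostLE (Set.range V)) :
    ∃ W, IsInfiniteClosed W ∧ ∀ n, AlmostLE W (V n) := by
  obtain ⟨v, y, hv, hmem, hy⟩ := exists_orthonormal_seq (𝕜 := 𝕜)
    (P := fun v n ↦ ∀ j ≤ n, v ∈ V j) (R := (· < ·)) <| by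
      intro F _ s
      obtain ⟨v, hvF, hv1, hvV⟩ := exists_norm_eq_one_mem_of_isChain
        (fun n ↦ (hV n).not_finiteDimensional) hchain (Finset.Iic (s.sup id + 1)) F
      exact ⟨v, hvF, hv1, s.sup id + 1, fun j hj ↦ hvV j (Finset.mem_Iic.2 hj),
        fun x hx ↦ Nat.lt_succ_of_le (Finset.le_sup (f := id) hx)⟩
  have hmono : StrictMono y := fun m n ↦ hy m n
  refine ⟨_, isInfiniteClosed_closedSpan hv, fun n ↦ almostLE_closedSpan hv (hV n).isClosed ?_⟩
  refine (Set.finite_Iio n).subset fun k hk ↦ Set.mem_Iio.2 <| not_le.1 fun hnk ↦ hk ?_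
  exact hmem k n (hnk.trans (hmono.id_le k))

theorem exists_isInfiniteClosed_almostLE (hinf : ¬FiniteDimensional 𝕜 E)
    {C : Set (Submodule 𝕜 E)} (hC : C.Countable) (hV : ∀ V ∈ C, IsInfiniteClosed V)
    (hchain : IsChain AlmostLE C) : ∃ W, IsInfiniteClosed W ∧ ∀ V ∈ C, AlmostLE W V := by
  rcases C.eq_empty_or_nonempty with rfl | hne
  · exact ⟨⊤, ⟨isClosed_univ, fun _ ↦ hinf (Module.Finite.equiv Submodule.topEquiv)⟩, by simp⟩
  · obtain ⟨V, rfl⟩ := hC.exists_eq_range hne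
    simpa using exists_isInfiniteClosed_almostLE_of_seq (by simpa using hV) hchain

/-- The numerical range of the compression of `a` to `W` lies within `ε` of the scalar `l`. -/
def IsNearlyScalarOn (a : E →L[𝕜] E) (W : Submodule 𝕜 E) (l : 𝕜) (ε : ℝ) : Prop :=
  ∀ w ∈ W, ‖⟪w, a w⟫_𝕜 - l * (‖w‖ : 𝕜) ^ 2‖ ≤ ε * ‖w‖ ^ 2

theorem isNearlyScalarOn_closedSpan {ι : Type*} {v : ι → E} (hv : Orthonormal 𝕜 v)
    {a : E →L[𝕜] E} {l : 𝕜} {ε : ℝ} (hoff : ∀ i j, i ≠ j → ⟪v i, a (v j)⟫_𝕜 = 0)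
    (hdiag : ∀ i, ‖⟪v i, a (v i)⟫_𝕜 - l‖ ≤ ε) : IsNearlyScalarOn a (closedSpan 𝕜 v) l ε := by
  refine fun w ↦ closedSpan_induction
    (p := fun w ↦ ‖⟪w, a w⟫_𝕜 - l * (‖w‖ : 𝕜) ^ 2‖ ≤ ε * ‖w‖ ^ 2)
    (isClosed_le (by fun_prop) (by fun_prop)) fun c ↦ ?_
  have hnorm : (‖Finsupp.linearCombination 𝕜 v c‖ : 𝕜) ^ 2 =
      ∑ i ∈ c.support, (‖c i‖ : 𝕜) ^ 2 := by
    exact_mod_cast congrArg ((↑) : ℝ → 𝕜) (norm_sq_linearCombination hv c)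
  have hinner : ⟪Finsupp.linearCombination 𝕜 v c, a (Finsupp.linearCombination 𝕜 v c)⟫_𝕜 =
      ∑ i ∈ c.support, (‖c i‖ : 𝕜) ^ 2 * ⟪v i, a (v i)⟫_𝕜 := by
    rw [Finsupp.linearCombination_apply, Finsupp.sum, map_sum, sum_inner]
    refine Finset.sum_congr rfl fun i hi ↦ ?_
    rw [inner_sum, Finset.sum_eq_single_of_mem i hi, map_smul, inner_smul_left,
      inner_smul_right, ← mul_assoc, RCLike.conj_mul]
    intro j _ hji
    rw [map_smul, inner_smul_left, inner_smul_right, hoff i j hji.symm, mul_zero, mul_zero]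
  rw [norm_sq_linearCombination hv, hnorm, hinner, Finset.mul_sum, ← Finset.sum_sub_distrib,
    Finset.mul_sum]
  refine norm_sum_le_of_le _ fun i _ ↦ ?_
  rw [mul_comm l, ← mul_sub, norm_mul, norm_pow, RCLike.norm_ofReal, abs_norm, mul_comm]
  exact mul_le_mul_of_nonneg_right (hdiag i) (by positivity)

theorem exists_orthonormal_seq_diagonal [CompleteSpace E] {V : Submodule 𝕜 E}
    (hV : ¬FiniteDimensional 𝕜 V) (a : E →L[𝕜] E) :
    ∃ v : ℕ → E, Orthonormal 𝕜 v ∧ (∀ n, v n ∈ V) ∧ ∀ m n, m ≠ n → ⟪v m, a (v n)⟫_𝕜 = 0 := by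
  obtain ⟨v, y, hv, hP, hR⟩ := exists_orthonormal_seq (𝕜 := 𝕜) (P := fun v y ↦ v ∈ V ∧ y = v)
    (R := fun x y ↦ ⟪x, a y⟫_𝕜 = 0 ∧ ⟪y, a x⟫_𝕜 = 0) <| by
      intro F _ s
      have := FiniteDimensional.span_of_finite 𝕜
        ((s.finite_toSet.image a).union (s.finite_toSet.image a.adjoint))
      obtain ⟨v, ⟨hvV, hvF⟩, hv1⟩ := exists_mem_inf_orthogonal_norm_eq_one hV
        (F ⊔ Submodule.span 𝕜 (a '' s ∪ a.adjoint '' s))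
      rw [SetLike.mem_coe, ← Submodule.inf_orthogonal, Submodule.mem_inf,
        mem_orthogonal_span_iff] at hvF
      refine ⟨v, hvF.1, hv1, v, ⟨hvV, rfl⟩, fun x hx ↦ ⟨?_, inner_eq_zero_symm.1 ?_⟩⟩
      · rw [← ContinuousLinearMap.adjoint_inner_left]
        exact hvF.2 _ (Or.inr ⟨x, hx, rfl⟩)
      · exact hvF.2 _ (Or.inl ⟨x, hx, rfl⟩)
  obtain rfl : y = v := funext fun n ↦ (hP n).2
  refine ⟨y, hv, fun n ↦ (hP n).1, fun m n hmn ↦ ?_⟩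
  rcases hmn.lt_or_gt with hlt | hlt
  · exact (hR m n hlt).1
  · exact (hR n m hlt).2

theorem IsInfiniteClosed.exists_isNearlyScalarOn [CompleteSpace E] {V : Submodule 𝕜 E}
    (hV : IsInfiniteClosed V) (a : E →L[𝕜] E) {ε : ℝ} (hε : 0 < ε) :
    ∃ W ≤ V, IsInfiniteClosed W ∧ ∃ l, IsNearlyScalarOn a W l ε := by
  obtain ⟨v, hv, hmem, hoff⟩ := exists_orthonormal_seq_diagonal hV.not_finiteDimensional a
  have hbdd (n : ℕ) : ⟪v n, a (v n)⟫_𝕜 ∈ Metric.closedBall 0 ‖a‖ := by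
    rw [mem_closedBall_zero_iff]
    calc ‖⟪v n, a (v n)⟫_𝕜‖ ≤ ‖v n‖ * ‖a (v n)‖ := norm_inner_le_norm _ _
      _ ≤ ‖a‖ := by simpa [hv.1 n] using a.le_opNorm (v n)
  obtain ⟨l, -, φ, hφ, hl⟩ := tendsto_subseq_of_bounded Metric.isBounded_closedBall hbdd
  obtain ⟨N, hN⟩ := Metric.tendsto_atTop.1 hl ε hε
  have hinj : Function.Injective fun k ↦ φ (k + N) := hφ.injective.comp (add_left_injective N)
  have hvφ : Orthonormal 𝕜 fun k ↦ v (φ (k + N)) := hv.comp _ hinj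
  refine ⟨_, closedSpan_le hV.isClosed fun k ↦ hmem _, isInfiniteClosed_closedSpan hvφ, l,
    isNearlyScalarOn_closedSpan hvφ (fun i j hij ↦ hoff _ _ (hinj.ne hij)) fun i ↦ ?_⟩
  simpa [dist_eq_norm] using (hN (i + N) (Nat.le_add_left N i)).le

end Geometry

/-! ### Positive operators and strong limits -/

theorem one_sub_pow_le_nsmul {M : Type*} [CStarAlgebra M] [PartialOrder M] [StarOrderedRing M]
    {c : M} (h0 : 0 ≤ c) (h1 : c ≤ 1) (n : ℕ) : 1 - c ^ n ≤ n • (1 - c) := by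
  induction n with
  | zero => simp
  | succ n ih =>
    have hpos : 0 ≤ (1 - c ^ n) * (1 - c) := by
      refine Commute.mul_nonneg
        (sub_nonneg.2 (by simpa using CStarAlgebra.pow_antitone h0 h1 (Nat.zero_le n)))
        (sub_nonneg.2 h1) ?_
      exact (Commute.one_left _).sub_left
        ((Commute.one_right _).sub_right ((Commute.refl c).pow_left n))
    calc 1 - c ^ (n + 1) = (1 - c ^ n) + (1 - c) - (1 - c ^ n) * (1 - c) := by
          rw [pow_succ]
          noncomm_ring
      _ ≤ (1 - c ^ n) + (1 - c) := sub_le_self _ hpos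
      _ ≤ (n + 1) • (1 - c) := by
          rw [succ_nsmul]
          exact add_le_add_left ih _

section Operators

variable {H : Type*} [NormedAddCommGroup H] [InnerProductSpace ℂ H]

theorem reApplyInnerSelf_sub (S T : H →L[ℂ] H) (x : H) :
    (S - T).reApplyInnerSelf x = S.reApplyInnerSelf x - T.reApplyInnerSelf x := by
  simp [ContinuousLinearMap.reApplyInnerSelf_apply, inner_sub_left]

theorem reApplyInnerSelf_one (x : H) :
    (1 : H →L[ℂ] H).reApplyInnerSelf x = ‖x‖ ^ 2 := by
  rw [ContinuousLinearMap.reApplyInnerSelf_apply]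
  exact inner_self_eq_norm_sq x

theorem reApplyInnerSelf_mono {S T : H →L[ℂ] H} (h : S ≤ T) (x : H) :
    S.reApplyInnerSelf x ≤ T.reApplyInnerSelf x := by
  rw [← sub_nonneg, ← reApplyInnerSelf_sub]
  exact (ContinuousLinearMap.le_def S T |>.1 h).re_inner_nonneg_left x

theorem nonneg_iff_forall_inner_nonneg {T : H →L[ℂ] H} : 0 ≤ T ↔ ∀ x, 0 ≤ ⟪T x, x⟫_ℂ := by
  rw [ContinuousLinearMap.nonneg_iff_isPositive, ContinuousLinearMap.isPositive_iff_complex]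
  refine forall_congr' fun x ↦ ?_
  simp [Complex.nonneg_iff, Complex.ext_iff, and_comm]

section StrongLimits

variable {ι : Type*} {l : Filter ι} [l.NeBot] {T : ι → H →L[ℂ] H} {S : H →L[ℂ] H}

theorem commute_of_tendsto_apply {b : H →L[ℂ] H}
    (hT : ∀ x, Tendsto (fun i ↦ T i x) l (𝓝 (S x))) (hb : ∀ i, Commute b (T i)) : Commute b S := by
  ext x
  refine tendsto_nhds_unique ((b.continuous.tendsto _).comp (hT x)) ((hT (b x)).congr fun i ↦ ?_)
  exact (DFunLike.congr_fun (hb i).eq x).symm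

variable [CompleteSpace H]

theorem le_of_tendsto_apply {A : H →L[ℂ] H} (hT : ∀ x, Tendsto (fun i ↦ T i x) l (𝓝 (S x)))
    (hle : ∀ᶠ i in l, T i ≤ A) : S ≤ A := by
  rw [← sub_nonneg, nonneg_iff_forall_inner_nonneg]
  intro x
  have hlim : Tendsto (fun i ↦ ⟪(A - T i) x, x⟫_ℂ) l (𝓝 ⟪(A - S) x, x⟫_ℂ) :=
    (tendsto_const_nhds.sub (hT x)).inner tendsto_const_nhds
  exact ge_of_tendsto hlim <| hle.mono fun i hi ↦
    nonneg_iff_forall_inner_nonneg.1 (sub_nonneg.2 hi) x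

theorem ge_of_tendsto_apply {A : H →L[ℂ] H} (hT : ∀ x, Tendsto (fun i ↦ T i x) l (𝓝 (S x)))
    (hge : ∀ᶠ i in l, A ≤ T i) : A ≤ S := by
  rw [← neg_le_neg_iff]
  refine le_of_tendsto_apply (T := fun i ↦ -T i) (fun x ↦ ?_) (hge.mono fun i hi ↦ neg_le_neg hi)
  exact (hT x).neg

end StrongLimits

variable [CompleteSpace H]

theorem norm_sq_apply_le_reApplyInnerSelf {T : H →L[ℂ] H} (h0 : 0 ≤ T) (h1 : T ≤ 1) (x : H) :
    ‖T x‖ ^ 2 ≤ T.reApplyInnerSelf x := by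
  have hsq : T * T ≤ T := by
    rw [← sub_nonneg]
    simpa [mul_sub] using Commute.mul_nonneg h0 (sub_nonneg.2 h1)
      ((Commute.one_right T).sub_right (Commute.refl T))
  have hTT : (T * T).reApplyInnerSelf x = ‖T x‖ ^ 2 := by
    rw [ContinuousLinearMap.reApplyInnerSelf_apply, mul_apply_eq_comp,
      (IsSelfAdjoint.of_nonneg h0).isSymmetric.apply_clm]
    exact inner_self_eq_norm_sq (T x)
  exact hTT ▸ reApplyInnerSelf_mono hsq x

theorem exists_tendsto_apply_of_monotone {ι : Type*} [SemilatticeSup ι] [Nonempty ι]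
    [(atTop : Filter ι).IsCountablyGenerated] {T : ι → H →L[ℂ] H} (hT : Monotone T)
    (h0 : ∀ i, 0 ≤ T i) (h1 : ∀ i, T i ≤ 1) :
    ∃ S : H →L[ℂ] H, ∀ x, Tendsto (fun i ↦ T i x) atTop (𝓝 (S x)) := by
  have hex (x : H) : ∃ y, Tendsto (fun i ↦ T i x) atTop (𝓝 y) := by
    have hmono : Monotone fun i ↦ (T i).reApplyInnerSelf x :=
      fun i j hij ↦ reApplyInnerSelf_mono (hT hij) x
    have hbdd : BddAbove (Set.range fun i ↦ (T i).reApplyInnerSelf x) :=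
      ⟨_, Set.forall_mem_range.2 fun i ↦ reApplyInnerSelf_mono (h1 i) x⟩
    have hcauchy := (tendsto_atTop_ciSup hmono hbdd).cauchySeq
    refine cauchySeq_tendsto_of_complete (Metric.cauchySeq_iff'.2 fun ε hε ↦ ?_)
    obtain ⟨N, hN⟩ := Metric.cauchySeq_iff'.1 hcauchy (ε ^ 2) (by positivity)
    refine ⟨N, fun n hn ↦ ?_⟩
    rw [dist_eq_norm, ← sub_apply]
    refine lt_of_pow_lt_pow_left₀ 2 hε.le ?_
    calc ‖(T n - T N) x‖ ^ 2 ≤ (T n - T N).reApplyInnerSelf x :=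
          norm_sq_apply_le_reApplyInnerSelf (sub_nonneg.2 (hT hn))
            ((sub_le_self _ (h0 N)).trans (h1 n)) x
      _ < ε ^ 2 := by
          rw [reApplyInnerSelf_sub]
          exact (abs_lt.1 (hN n hn)).2
  choose f hf using hex
  exact ⟨continuousLinearMapOfTendsto T (tendsto_pi_nhds.2 hf), hf⟩

theorem exists_tendsto_sum_apply_of_sum_le_one {ι : Type*} [Countable ι] {d : ι → H →L[ℂ] H}
    (h0 : ∀ i, 0 ≤ d i) (h1 : ∀ s : Finset ι, ∑ i ∈ s, d i ≤ 1) :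
    ∃ S : H →L[ℂ] H, ∀ x, Tendsto (fun s : Finset ι ↦ (∑ i ∈ s, d i) x) atTop (𝓝 (S x)) := by
  classical
  exact exists_tendsto_apply_of_monotone
    (fun _ _ hst ↦ Finset.sum_le_sum_of_subset_of_nonneg hst fun i _ _ ↦ h0 i)
    (fun _ ↦ Finset.sum_nonneg fun i _ ↦ h0 i) h1

theorem tendsto_pow_apply_zero {c : H →L[ℂ] H} (h0 : 0 ≤ c) (h1 : c ≤ 1)
    (hfix : ∀ x, c x = x → x = 0) (x : H) :
    Tendsto (fun n : ℕ ↦ (c ^ n) x) atTop (𝓝 0) := by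
  have hanti := CStarAlgebra.pow_antitone h0 h1
  obtain ⟨S, hS⟩ := exists_tendsto_apply_of_monotone (T := fun n ↦ 1 - c ^ n)
    (fun m n hmn ↦ sub_le_sub_left (hanti hmn) _)
    (fun n ↦ sub_nonneg.2 (by simpa using hanti (Nat.zero_le n)))
    (fun n ↦ sub_le_self _ (CStarAlgebra.pow_nonneg h0 n))
  have hlim : Tendsto (fun n : ℕ ↦ (c ^ n) x) atTop (𝓝 (x - S x)) := by
    simpa using (tendsto_const_nhds (x := x)).sub (hS x)
  have hlim' : Tendsto (fun n : ℕ ↦ (c ^ (n + 1)) x) atTop (𝓝 (c (x - S x))) := by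
    simp only [pow_succ']
    exact (c.continuous.tendsto _).comp hlim
  rwa [hfix _ (tendsto_nhds_unique hlim' ((tendsto_add_atTop_iff_nat 1).2 hlim))] at hlim

end Operators

/-! ### Operators of large variance -/

section LargeVariance

variable {H : Type*} [NormedAddCommGroup H] [InnerProductSpace ℂ H]

/-- The variance of `S` in the vector state given by a unit vector `w`. A pure state on a masa
is multiplicative, so it cannot be a limit of vector states with variance bounded away from `0` on
an element of the masa. -/
noncomputable def vectorVariance (S : H →L[ℂ] H) (w : H) : ℝ :=
  ‖S w‖ ^ 2 - ‖⟪w, S w⟫_ℂ‖ ^ 2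

theorem orthonormal_inv_sqrt_two_smul_add {ι : Type*} {e o : ι → H} (he : Orthonormal ℂ e)
    (ho : Orthonormal ℂ o) (heo : ∀ i j, ⟪e i, o j⟫_ℂ = 0) :
    Orthonormal ℂ fun i ↦ ((√2)⁻¹ : ℂ) • (e i + o i) := by
  classical
  have hoe (i j : ι) : ⟪o i, e j⟫_ℂ = 0 := inner_eq_zero_symm.1 (heo j i)
  have hsq : ((√2 : ℝ) : ℂ) * √2 = 2 := by
    rw [← Complex.ofReal_mul, Real.mul_self_sqrt zero_le_two, Complex.ofReal_ofNat]
  rw [orthonormal_iff_ite] at he ho ⊢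
  intro i j
  simp only [inner_smul_left, inner_smul_right, inner_add_left, inner_add_right, he, ho, heo, hoe,
    map_inv₀, Complex.conj_ofReal, zero_add, add_zero]
  rw [← mul_add, ← mul_assoc, ← mul_inv, hsq]
  split_ifs <;> norm_num

variable [CompleteSpace H]

theorem vectorVariance_ge_of_norm_sub_le {P S : H →L[ℂ] H} (hP : IsStarProjection P) {w : H}
    (hw : ‖w‖ = 1) (hPw : ‖P w‖ ^ 2 = 1 / 2) (hS : ‖S w - P w‖ ≤ 1 / 100) :
    1 / 8 ≤ vectorVariance S w := by
  have hinner : ⟪w, P w⟫_ℂ = 1 / 2 := by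
    have hPP : ⟪w, P w⟫_ℂ = ⟪P w, P w⟫_ℂ := by
      conv_lhs => rw [← hP.isIdempotentElem.eq]
      exact (hP.isSelfAdjoint.isSymmetric w (P w)).symm
    rw [hPP, inner_self_eq_norm_sq_to_K]
    norm_cast
    rw [hPw]
    norm_num
  have hmean : ‖⟪w, S w⟫_ℂ‖ ≤ 1 / 2 + 1 / 100 := by
    calc ‖⟪w, S w⟫_ℂ‖ = ‖1 / 2 + ⟪w, S w - P w⟫_ℂ‖ := by rw [inner_sub_right, hinner]; ring_nf
      _ ≤ ‖(1 / 2 : ℂ)‖ + ‖w‖ * ‖S w - P w‖ :=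
          (norm_add_le _ _).trans (add_le_add_right (norm_inner_le_norm _ _) _)
      _ ≤ 1 / 2 + 1 / 100 := by
          rw [hw, one_mul]
          exact add_le_add (by norm_num) hS
  have hnorm : 2 / 3 ≤ ‖S w‖ := by
    have hP : 7 / 10 ≤ ‖P w‖ := le_of_sq_le_sq (by rw [hPw]; norm_num) (norm_nonneg _)
    linarith [norm_sub_norm_le (P w) (S w), norm_sub_rev (P w) (S w)]
  calc 1 / 8 ≤ (2 / 3 : ℝ) ^ 2 - (1 / 2 + 1 / 100) ^ 2 := by norm_num
    _ ≤ vectorVariance S w := by rw [vectorVariance]; gcongr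

theorem vectorVariance_ge_of_mem_closedSpan {ι : Type*} {e o : ι → H} (he : Orthonormal ℂ e)
    (ho : Orthonormal ℂ o) (heo : ∀ i j, ⟪e i, o j⟫_ℂ = 0) {S : H →L[ℂ] H} {ε : ι → ℝ}
    (hSe : ∀ i, ‖S (e i) - e i‖ ≤ ε i) (hSo : ∀ i, ‖S (o i)‖ ≤ ε i)
    (hε : ∀ s : Finset ι, ∑ i ∈ s, 2 * ε i ≤ 1 / 100) {w : H}
    (hw : w ∈ closedSpan ℂ fun i ↦ ((√2)⁻¹ : ℂ) • (e i + o i)) (hw1 : ‖w‖ = 1) :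
    1 / 8 ≤ vectorVariance S w := by
  have hu := orthonormal_inv_sqrt_two_smul_add he ho heo
  have : CompleteSpace (closedSpan ℂ e) := (isClosed_closedSpan e).completeSpace_coe
  set P := (closedSpan ℂ e).starProjection
  have hPe (i : ι) : P (e i) = e i := Submodule.starProjection_eq_self_iff.2 (mem_closedSpan e i)
  have hPo (i : ι) : P (o i) = 0 := by
    refine (Submodule.starProjection_apply_eq_zero_iff _).2 fun x hx ↦ ?_
    refine Submodule.mem_orthogonal_singleton_iff_inner_left.1
      (closedSpan_le (Submodule.isClosed_orthogonal (ℂ ∙ o i)) (fun j ↦ ?_) hx)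
    exact Submodule.mem_orthogonal_singleton_iff_inner_left.2 (heo j i)
  have hr : ‖((√2)⁻¹ : ℂ)‖ = (√2)⁻¹ := by simp [abs_of_nonneg]
  refine vectorVariance_ge_of_norm_sub_le (P := P) isStarProjection_starProjection hw1 ?_ ?_
  · rw [norm_sq_map_of_mem_closedSpan hu he (r := ((√2)⁻¹ : ℂ)) (by simp [hPe, hPo]) hw, hr, hw1]
    norm_num
  · have hSP (i : ι) : ‖(S - P) (((√2)⁻¹ : ℂ) • (e i + o i))‖ ≤ 2 * ε i := by
      have hsum : ‖(S (e i) - e i) + S (o i)‖ ≤ 2 * ε i :=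
        (norm_add_le_of_le (hSe i) (hSo i)).trans_eq (two_mul _).symm
      have heq : (S - P) (e i + o i) = (S (e i) - e i) + S (o i) := by
        simp [hPe, hPo, add_sub_right_comm]
      rw [map_smul, norm_smul, hr, heq]
      refine (mul_le_of_le_one_left (norm_nonneg _) (inv_le_one_of_one_le₀ ?_)).trans hsum
      exact Real.one_le_sqrt.2 one_le_two
    simpa [hw1] using norm_map_le_of_mem_closedSpan hu hSP hε hw

theorem sum_pow_sub_pow_le_one {c : H →L[ℂ] H} (h0 : 0 ≤ c) (h1 : c ≤ 1) {n : ℕ → ℕ}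
    (hn : Monotone n) (s : Finset ℕ) : ∑ k ∈ s, (c ^ n k - c ^ n (k + 1)) ≤ 1 := by
  have hnonneg (k : ℕ) : 0 ≤ c ^ n k - c ^ n (k + 1) :=
    sub_nonneg.2 (CStarAlgebra.pow_antitone h0 h1 (hn k.le_succ))
  calc ∑ k ∈ s, (c ^ n k - c ^ n (k + 1))
      ≤ ∑ k ∈ Finset.range (s.sup id + 1), (c ^ n k - c ^ n (k + 1)) :=
        Finset.sum_le_sum_of_subset_of_nonneg s.subset_range_sup_succ fun k _ _ ↦ hnonneg k
    _ = c ^ n 0 - c ^ n (s.sup id + 1) := Finset.sum_range_sub' (fun k ↦ c ^ n k) _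
    _ ≤ c ^ n 0 := sub_le_self _ (CStarAlgebra.pow_nonneg h0 _)
    _ ≤ 1 := by simpa using CStarAlgebra.pow_antitone h0 h1 (Nat.zero_le (n 0))

theorem exists_operator_between_even_odd_bands {c : H →L[ℂ] H} (h0 : 0 ≤ c) (h1 : c ≤ 1)
    {n : ℕ → ℕ} (hn : Monotone n) :
    ∃ S : H →L[ℂ] H, 0 ≤ S ∧ S ≤ 1 ∧ (∀ b, Commute b c → Commute b S) ∧
      (∀ j, c ^ n (2 * j) - c ^ n (2 * j + 1) ≤ S) ∧
      ∀ j, S ≤ 1 - (c ^ n (2 * j + 1) - c ^ n (2 * j + 1 + 1)) := by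
  set d : ℕ → H →L[ℂ] H := fun k ↦ c ^ n k - c ^ n (k + 1)
  have hd0 (k : ℕ) : 0 ≤ d k := sub_nonneg.2 (CStarAlgebra.pow_antitone h0 h1 (hn k.le_succ))
  have hsum (s : Finset ℕ) (k : ℕ) (hk : Odd k) : ∑ j ∈ s, d (2 * j) + d k ≤ 1 := by
    have hmem : k ∉ s.map ⟨(2 * ·), mul_right_injective₀ two_ne_zero⟩ := by
      simp only [Finset.mem_map, Function.Embedding.coeFn_mk, not_exists, not_and]
      rintro j - rfl
      exact Nat.not_odd_iff_even.2 (even_two_mul j) hk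
    have hle := sum_pow_sub_pow_le_one h0 h1 hn
      (insert k (s.map ⟨(2 * ·), mul_right_injective₀ two_ne_zero⟩))
    rwa [Finset.sum_insert hmem, Finset.sum_map, add_comm] at hle
  have hsum1 (s : Finset ℕ) : ∑ j ∈ s, d (2 * j) ≤ 1 :=
    (le_add_of_nonneg_right (hd0 1)).trans (hsum s 1 odd_one)
  obtain ⟨S, hS⟩ := exists_tendsto_sum_apply_of_sum_le_one (fun j ↦ hd0 (2 * j)) hsum1
  refine ⟨S, ge_of_tendsto_apply hS (.of_forall fun s ↦ Finset.sum_nonneg fun j _ ↦ hd0 _),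
    le_of_tendsto_apply hS (.of_forall hsum1), fun b hb ↦ commute_of_tendsto_apply hS fun s ↦ ?_,
    fun j ↦ ge_of_tendsto_apply hS ?_, fun j ↦ le_of_tendsto_apply hS (.of_forall fun s ↦ ?_)⟩
  · exact Commute.sum_right _ _ _ fun j _ ↦ (hb.pow_right _).sub_right (hb.pow_right _)
  · filter_upwards [eventually_ge_atTop {j}] with s hs
    exact Finset.single_le_sum (f := fun j ↦ d (2 * j)) (fun j _ ↦ hd0 _)
      (Finset.singleton_subset_iff.1 hs)
  · exact le_sub_iff_add_le.2 (hsum s _ (odd_two_mul_add_one j))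

theorem norm_apply_le_of_le_one_sub {T D : H →L[ℂ] H} (h0 : 0 ≤ T) (h1 : T ≤ 1)
    (hTD : T ≤ 1 - D) {v : H} (hv : ‖v‖ = 1) {ε : ℝ} (hε : 0 ≤ ε)
    (hD : 1 - ε ^ 2 ≤ D.reApplyInnerSelf v) : ‖T v‖ ≤ ε := by
  refine le_of_sq_le_sq ?_ hε
  have hle := reApplyInnerSelf_mono hTD v
  rw [reApplyInnerSelf_sub, reApplyInnerSelf_one, hv] at hle
  linarith [norm_sq_apply_le_reApplyInnerSelf h0 h1 v]

theorem exists_lt_pow_sub_pow_ge {c : H →L[ℂ] H} (h0 : 0 ≤ c) (h1 : c ≤ 1)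
    (hfix : ∀ x, c x = x → x = 0) (n : ℕ) {ε : ℝ} (hε : 0 < ε) {v : H} (hv : ‖v‖ = 1)
    (hcv : (1 - c).reApplyInnerSelf v < ε / 2 / (n + 1)) :
    ∃ m > n, 1 - ε ≤ (c ^ n - c ^ m).reApplyInnerSelf v := by
  have hzero : Tendsto (fun m ↦ (c ^ m).reApplyInnerSelf v) atTop (𝓝 0) := by
    simp_rw [ContinuousLinearMap.reApplyInnerSelf_apply]
    rw [← Complex.zero_re, ← inner_zero_left (𝕜 := ℂ) v]
    exact (Complex.continuous_re.tendsto _).comp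
      ((tendsto_pow_apply_zero h0 h1 hfix v).inner tendsto_const_nhds)
  obtain ⟨m, hm, hnm⟩ :=
    ((hzero.eventually (gt_mem_nhds (half_pos hε))).and (eventually_gt_atTop n)).exists
  have hbernoulli : 1 - (c ^ n).reApplyInnerSelf v ≤ n * (1 - c).reApplyInnerSelf v := by
    have h := reApplyInnerSelf_mono (one_sub_pow_le_nsmul h0 h1 n) v
    rw [reApplyInnerSelf_sub, reApplyInnerSelf_one, hv, one_pow] at h
    simpa [ContinuousLinearMap.reApplyInnerSelf_apply, ← Nat.cast_smul_eq_nsmul ℂ,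
      inner_smul_left] using h
  have hq0 : 0 ≤ (1 - c).reApplyInnerSelf v :=
    (ContinuousLinearMap.le_def c 1 |>.1 h1).re_inner_nonneg_left v
  rw [lt_div_iff₀ (by positivity)] at hcv
  refine ⟨m, hnm, ?_⟩
  rw [reApplyInnerSelf_sub]
  linarith

theorem exists_orthonormal_seq_pow_sub_pow_ge {V : Submodule ℂ H} {c : H →L[ℂ] H} (h0 : 0 ≤ c)
    (h1 : c ≤ 1) (hfix : ∀ x, c x = x → x = 0)
    (hV : ∀ δ > 0, ∀ (F : Submodule ℂ H) [FiniteDimensional ℂ F],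
      ∃ v ∈ V ⊓ Fᗮ, ‖v‖ = 1 ∧ (1 - c).reApplyInnerSelf v < δ)
    {ε : ℕ → ℝ} (hε : ∀ k, 0 < ε k) (hanti : Antitone ε) :
    ∃ (v : ℕ → H) (n : ℕ → ℕ), Orthonormal ℂ v ∧ (∀ k, v k ∈ V) ∧ StrictMono n ∧
      ∀ k, 1 - ε k ≤ (c ^ n k - c ^ n (k + 1)).reApplyInnerSelf (v k) := by
  obtain ⟨v, y, hv, hP, hR⟩ := exists_orthonormal_seq (𝕜 := ℂ)
    (P := fun v (y : ℕ × ℕ) ↦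
      v ∈ V ∧ y.1 < y.2 ∧ 1 - ε y.1 ≤ (c ^ y.1 - c ^ y.2).reApplyInnerSelf v)
    (R := fun x y ↦ x.2 ≤ y.1) <| by
      intro F _ s
      set N := s.sup Prod.snd
      obtain ⟨v, ⟨hvV, hvF⟩, hv1, hcv⟩ :=
        hV (ε N / 2 / (N + 1)) (div_pos (half_pos (hε N)) (by positivity)) F
      obtain ⟨m, hm, hq⟩ := exists_lt_pow_sub_pow_ge h0 h1 hfix N (hε N) hv1 hcv
      exact ⟨v, hvF, hv1, (N, m), ⟨hvV, hm, hq⟩, fun x hx ↦ Finset.le_sup (f := Prod.snd) hx⟩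
  have hmono : StrictMono fun k ↦ (y k).1 :=
    strictMono_nat_of_lt_succ fun k ↦ (hP k).2.1.trans_le (hR k (k + 1) k.lt_succ_self)
  refine ⟨v, fun k ↦ (y k).1, hv, fun k ↦ (hP k).1, hmono, fun k ↦ ?_⟩
  calc 1 - ε k ≤ 1 - ε (y k).1 := sub_le_sub_left (hanti (hmono.id_le k)) 1
    _ ≤ (c ^ (y k).1 - c ^ (y k).2).reApplyInnerSelf (v k) := (hP k).2.2
    _ ≤ (c ^ (y k).1 - c ^ (y (k + 1)).1).reApplyInnerSelf (v k) :=
        reApplyInnerSelf_mono (sub_le_sub_left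
          (CStarAlgebra.pow_antitone h0 h1 (hR k (k + 1) k.lt_succ_self)) _) _

theorem IsInfiniteClosed.exists_vectorVariance_ge {V : Submodule ℂ H} (hV : IsInfiniteClosed V)
    {c : H →L[ℂ] H} (h0 : 0 ≤ c) (h1 : c ≤ 1) (hfix : ∀ x, c x = x → x = 0)
    (hsmall : ∀ δ > 0, ∀ (F : Submodule ℂ H) [FiniteDimensional ℂ F],
      ∃ v ∈ V ⊓ Fᗮ, ‖v‖ = 1 ∧ (1 - c).reApplyInnerSelf v < δ) :
    ∃ W ≤ V, IsInfiniteClosed W ∧ ∃ S : H →L[ℂ] H, (∀ b, Commute b c → Commute b S) ∧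
      ∀ w ∈ W, ‖w‖ = 1 → 1 / 8 ≤ vectorVariance S w := by
  obtain ⟨v, n, hv, hvV, hn, hq⟩ := exists_orthonormal_seq_pow_sub_pow_ge h0 h1 hfix hsmall
    (ε := fun k ↦ ((1 / 2) ^ (k / 2 + 10)) ^ 2) (fun k ↦ by positivity) fun k l hkl ↦
      pow_le_pow_left₀ (by positivity) (pow_le_pow_of_le_one (by norm_num) (by norm_num)
        (by lia)) 2
  obtain ⟨S, hS0, hS1, hcomm, heven, hodd⟩ := exists_operator_between_even_odd_bands h0 h1
    hn.monotone
  have he : Orthonormal ℂ fun j ↦ v (2 * j) := hv.comp _ fun i j h ↦ by lia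
  have ho : Orthonormal ℂ fun j ↦ v (2 * j + 1) := hv.comp _ fun i j h ↦ by lia
  have heo (i j : ℕ) : ⟪v (2 * i), v (2 * j + 1)⟫_ℂ = 0 := hv.2 (by lia)
  have hSe (j : ℕ) : ‖S (v (2 * j)) - v (2 * j)‖ ≤ (1 / 2) ^ (j + 10) := by
    rw [norm_sub_rev]
    refine norm_apply_le_of_le_one_sub (sub_nonneg.2 hS1) (sub_le_self _ hS0)
      (sub_le_sub_left (heven j) 1) (hv.1 _) (by positivity) ?_
    simpa using hq (2 * j)
  have hSo (j : ℕ) : ‖S (v (2 * j + 1))‖ ≤ (1 / 2) ^ (j + 10) := by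
    refine norm_apply_le_of_le_one_sub hS0 hS1 (hodd j) (hv.1 _) (by positivity) ?_
    simpa [show (2 * j + 1) / 2 = j by lia] using hq (2 * j + 1)
  refine ⟨_, closedSpan_le hV.isClosed fun j ↦ V.smul_mem _ (V.add_mem (hvV _) (hvV _)),
    isInfiniteClosed_closedSpan (orthonormal_inv_sqrt_two_smul_add he ho heo), S, hcomm,
    fun w hw ↦ vectorVariance_ge_of_mem_closedSpan he ho heo hSe hSo (fun s ↦ ?_) hw⟩
  have hgeom := summable_geometric_two.sum_le_tsum s fun k _ ↦ by positivity
  rw [tsum_geometric_two] at hgeom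
  simp only [pow_add, ← Finset.mul_sum, ← Finset.sum_mul]
  linarith

theorem IsInfiniteClosed.bounded_below_or_exists_vectorVariance_ge {V : Submodule ℂ H}
    (hV : IsInfiniteClosed V) {a : H →L[ℂ] H} (h0 : 0 ≤ a) (h1 : a ≤ 1)
    (hinj : Function.Injective a) :
    (∃ δ > 0, ∃ F : Submodule ℂ H, FiniteDimensional ℂ F ∧
      ∀ v ∈ V ⊓ Fᗮ, ‖v‖ = 1 → δ ≤ a.reApplyInnerSelf v) ∨
    ∃ W ≤ V, IsInfiniteClosed W ∧ ∃ S : H →L[ℂ] H, (∀ b, Commute b a → Commute b S) ∧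
      ∀ w ∈ W, ‖w‖ = 1 → 1 / 8 ≤ vectorVariance S w := by
  by_cases hbelow : ∃ δ > 0, ∃ F : Submodule ℂ H, FiniteDimensional ℂ F ∧
      ∀ v ∈ V ⊓ Fᗮ, ‖v‖ = 1 → δ ≤ a.reApplyInnerSelf v
  · exact Or.inl hbelow
  right
  push Not at hbelow
  obtain ⟨W, hWV, hW, S, hcomm, hvar⟩ := hV.exists_vectorVariance_ge (sub_nonneg.2 h1)
    (sub_le_self 1 h0) (fun x hx ↦ hinj (by simpa using hx)) fun δ hδ F hF ↦ by
      simpa using hbelow δ hδ F hF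
  exact ⟨W, hWV, hW, S, fun b hb ↦ hcomm b ((Commute.one_right b).sub_right hb), hvar⟩

end LargeVariance

/-! ### The generic filter -/

section TailFilter

variable {𝕜 E ι : Type*} [RCLike 𝕜] [NormedAddCommGroup E] [InnerProductSpace 𝕜 E]

/-- The filter of unit vectors that eventually lie in every `V i` and eventually are orthogonal
to every finite-dimensional subspace. -/
def tailFilter (V : ι → Submodule 𝕜 E) : Filter E :=
  ⨅ j : ι × {F : Submodule 𝕜 E // FiniteDimensional 𝕜 F},
    𝓟 {v | ‖v‖ = 1 ∧ v ∈ V j.1 ∧ v ∈ j.2.1ᗮ}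

theorem eventually_tailFilter (V : ι → Submodule 𝕜 E) (i : ι) (F : Submodule 𝕜 E)
    [hF : FiniteDimensional 𝕜 F] : ∀ᶠ v in tailFilter V, ‖v‖ = 1 ∧ v ∈ V i ∧ v ∈ Fᗮ :=
  mem_iInf_of_mem (i, ⟨F, hF⟩) (mem_principal_self _)

theorem tailFilter_neBot [Nonempty ι] {V : ι → Submodule 𝕜 E}
    (hinf : ∀ i, ¬FiniteDimensional 𝕜 (V i)) (hV : IsChain AlmostLE (Set.range V)) :
    (tailFilter V).NeBot := by
  classical
  refine (hasBasis_iInf_principal_finite _).neBot_iff.2 fun {t} ht ↦ ?_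
  have (j : ht.toFinset) : FiniteDimensional 𝕜 j.1.2.1 := j.1.2.2
  obtain ⟨v, hvF, hv1, hvV⟩ := exists_norm_eq_one_mem_of_isChain hinf hV
    (ht.toFinset.image Prod.fst) (⨆ j : ht.toFinset, j.1.2.1)
  refine ⟨v, Set.mem_iInter₂.2 fun j hj ↦ ?_⟩
  have hj' : j ∈ ht.toFinset := ht.mem_toFinset.2 hj
  exact ⟨hv1, hvV _ (Finset.mem_image_of_mem _ hj'), Submodule.orthogonal_le
    (le_iSup (fun j : ht.toFinset ↦ j.1.2.1) ⟨j, hj'⟩) hvF⟩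

end TailFilter

theorem mk_le_continuum_of_separableSpace (X : Type*) [MetricSpace X]
    [TopologicalSpace.SeparableSpace X] : Cardinal.mk X ≤ Cardinal.continuum := by
  rcases isEmpty_or_nonempty X with _ | _
  · simp
  set d := TopologicalSpace.denseSeq X
  have hinj : Function.Injective fun (x : X) (n : ℕ) ↦ dist x (d n) := by
    intro x y hxy
    have hdist : (dist x ·) = (dist y ·) :=
      (TopologicalSpace.denseRange_denseSeq X).equalizer (by fun_prop) (by fun_prop) hxy
    exact dist_eq_zero.1 ((congrFun hdist y).trans (dist_self y))
  simpa [Cardinal.mk_real] using Cardinal.mk_le_of_injective (ULift.up_injective.comp hinj)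

theorem mk_continuousLinearMap_le_continuum (𝕜 E : Type*) [NontriviallyNormedField 𝕜]
    [NormedAddCommGroup E] [NormedSpace 𝕜 E] [TopologicalSpace.SeparableSpace E] :
    Cardinal.mk (E →L[𝕜] E) ≤ Cardinal.continuum := by
  have hinj : Function.Injective fun (a : E →L[𝕜] E) (n : ℕ) ↦
      a (TopologicalSpace.denseSeq E n) := fun a b hab ↦ DFunLike.coe_injective <|
    (TopologicalSpace.denseRange_denseSeq E).equalizer a.continuous b.continuous hab
  calc Cardinal.mk (E →L[𝕜] E) ≤ Cardinal.mk E ^ Cardinal.aleph0 := by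
        simpa using Cardinal.mk_le_of_injective hinj
    _ ≤ Cardinal.continuum ^ Cardinal.aleph0 :=
        Cardinal.power_le_power_right (mk_le_continuum_of_separableSpace E)
    _ = Cardinal.continuum := Cardinal.continuum_power_aleph0

section GenericFilter

variable {H : Type*} [NormedAddCommGroup H] [InnerProductSpace ℂ H]

/-- Every operator becomes scalar in the limit along `L`, witnessed by closed subspaces that
eventually contain the vectors; this forces the limit of the vector states to exist and to be
pure. -/
structure IsExcising (L : Filter H) : Prop where
  eventually_norm_eq_one : ∀ᶠ v in L, ‖v‖ = 1
  exists_isNearlyScalarOn : ∀ (a : H →L[ℂ] H) {ε : ℝ}, 0 < ε → ∃ W : Submodule ℂ H,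
    IsClosed (W : Set H) ∧ (∀ᶠ v in L, v ∈ W) ∧ ∃ l, IsNearlyScalarOn a W l ε

/-- An excising filter leaving every finite-dimensional subspace, along which every injective
positive contraction `a` is either bounded below or split by an operator `S` in its
bicommutant. -/
structure IsGenericFilter (L : Filter H) : Prop extends IsExcising L where
  eventually_inner_eq_zero : ∀ x, ∀ᶠ v in L, ⟪x, v⟫_ℂ = 0
  bounded_below_or_vectorVariance_ge : ∀ a : H →L[ℂ] H, 0 ≤ a → a ≤ 1 → Function.Injective a →
    (∃ δ > 0, ∀ᶠ v in L, δ ≤ a.reApplyInnerSelf v) ∨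
    ∃ S : H →L[ℂ] H, (∀ b, Commute b a → Commute b S) ∧ ∀ᶠ v in L, 1 / 8 ≤ vectorVariance S v

/-- The subspace `V` meets the two requirements imposed by the operator `a` on a generic chain,
the first one with precision `ε`. -/
structure Decides (V : Submodule ℂ H) (a : H →L[ℂ] H) (ε : ℝ) : Prop where
  exists_isNearlyScalarOn : ∃ l, IsNearlyScalarOn a V l ε
  bounded_below_or_vectorVariance_ge : 0 ≤ a → a ≤ 1 → Function.Injective a →
    (∃ δ > 0, ∃ F : Submodule ℂ H, FiniteDimensional ℂ F ∧
      ∀ v ∈ V ⊓ Fᗮ, ‖v‖ = 1 → δ ≤ a.reApplyInnerSelf v) ∨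
    ∃ S : H →L[ℂ] H, (∀ b, Commute b a → Commute b S) ∧
      ∀ v ∈ V, ‖v‖ = 1 → 1 / 8 ≤ vectorVariance S v

theorem IsInfiniteClosed.exists_decides [CompleteSpace H] {V : Submodule ℂ H}
    (hV : IsInfiniteClosed V)
    (a : H →L[ℂ] H) {ε : ℝ} (hε : 0 < ε) : ∃ W ≤ V, IsInfiniteClosed W ∧ Decides W a ε := by
  obtain ⟨U, hUV, hU, l, hl⟩ := hV.exists_isNearlyScalarOn a hε
  by_cases ha : 0 ≤ a ∧ a ≤ 1 ∧ Function.Injective a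
  · rcases hU.bounded_below_or_exists_vectorVariance_ge ha.1 ha.2.1 ha.2.2 with
      hbelow | ⟨W, hWU, hW, hS⟩
    · exact ⟨U, hUV, hU, ⟨l, hl⟩, fun _ _ _ ↦ Or.inl hbelow⟩
    · exact ⟨W, hWU.trans hUV, hW, ⟨l, fun w hw ↦ hl w (hWU hw)⟩, fun _ _ _ ↦ Or.inr hS⟩
  · exact ⟨U, hUV, hU, ⟨l, hl⟩, fun h0 h1 hinj ↦ absurd ⟨h0, h1, hinj⟩ ha⟩

theorem isGenericFilter_tailFilter {V : (H →L[ℂ] H) × ℕ → Submodule ℂ H}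
    (hclosed : ∀ i, IsClosed (V i : Set H)) (hV : ∀ i, Decides (V i) i.1 (1 / (i.2 + 1))) :
    IsGenericFilter (tailFilter V) where
  eventually_norm_eq_one := (eventually_tailFilter V 0 ⊥).mono fun _ hv ↦ hv.1
  exists_isNearlyScalarOn a ε hε := by
    obtain ⟨n, hn⟩ := exists_nat_one_div_lt hε
    obtain ⟨l, hl⟩ := (hV (a, n)).exists_isNearlyScalarOn
    exact ⟨V (a, n), hclosed _, (eventually_tailFilter V _ ⊥).mono fun _ hv ↦ hv.2.1, l,
      fun w hw ↦ (hl w hw).trans (mul_le_mul_of_nonneg_right hn.le (by positivity))⟩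
  eventually_inner_eq_zero x := (eventually_tailFilter V 0 (ℂ ∙ x)).mono fun _ hv ↦
    Submodule.mem_orthogonal_singleton_iff_inner_right.1 hv.2.2
  bounded_below_or_vectorVariance_ge a h0 h1 hinj := by
    rcases (hV (a, 0)).bounded_below_or_vectorVariance_ge h0 h1 hinj with
      ⟨δ, hδ, F, _, hF⟩ | ⟨S, hcomm, hS⟩
    · exact Or.inl ⟨δ, hδ, (eventually_tailFilter V (a, 0) F).mono fun v hv ↦ hF v hv.2 hv.1⟩
    · exact Or.inr ⟨S, hcomm, (eventually_tailFilter V (a, 0) ⊥).mono fun v hv ↦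
        hS v hv.2.1 hv.1⟩

theorem exists_isGenericFilter [CompleteSpace H]
    (hinf : ¬FiniteDimensional ℂ H) (hcard : Cardinal.mk (H →L[ℂ] H) ≤ Cardinal.aleph 1) :
    ∃ L : Filter H, L.NeBot ∧ IsGenericFilter L := by
  have hι : Cardinal.mk ((H →L[ℂ] H) × ℕ) ≤ Cardinal.aleph 1 := by
    rw [Cardinal.mk_prod, Cardinal.lift_uzero, Cardinal.mk_nat, Cardinal.lift_aleph0]
    exact Cardinal.mul_le_of_le (Cardinal.aleph0_le_aleph 1) hcard (Cardinal.aleph0_le_aleph 1)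
  obtain ⟨V, hV, hchain⟩ := exists_isChain_range_of_countable_isChain
    (α := {V : Submodule ℂ H // IsInfiniteClosed V}) (r := fun W V ↦ AlmostLE W.1 V.1)
    (D := fun i V ↦ Decides V.1 i.1 (1 / (i.2 + 1))) hι <| by
      intro i C hC hCchain
      obtain ⟨U, hU, hUC⟩ := exists_isInfiniteClosed_almostLE hinf (hC.image Subtype.val)
        (Set.forall_mem_image.2 fun V _ ↦ V.2)
        (hCchain.image_of_map_rel _ AlmostLE Subtype.val fun _ _ h ↦ h)
      obtain ⟨W, hWU, hW, hdec⟩ := hU.exists_decides i.1 (Nat.one_div_pos_of_nat (n := i.2))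
      exact ⟨⟨W, hW⟩, hdec, fun V hVC ↦ (AlmostLE.of_le hWU).trans (hUC V ⟨V, hVC, rfl⟩)⟩
  refine ⟨_, tailFilter_neBot (V := fun i ↦ (V i).1) (fun i ↦ (V i).2.not_finiteDimensional) ?_,
    isGenericFilter_tailFilter (fun i ↦ (V i).2.isClosed) hV⟩
  rw [Set.range_comp' Subtype.val V]
  exact hchain.image_of_map_rel _ AlmostLE Subtype.val fun _ _ h ↦ h

end GenericFilter

/-! ### The limit state -/

section VectorLimit

variable {H : Type*} [NormedAddCommGroup H] [InnerProductSpace ℂ H] {L : Filter H}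

/-- `φ` is the pointwise limit along `L` of the vector functionals `a ↦ ⟪v, a v⟫`. -/
def IsVectorLimit (φ : (H →L[ℂ] H) →ₗ[ℂ] ℂ) (L : Filter H) : Prop :=
  ∀ a, Tendsto (fun v ↦ ⟪v, a v⟫_ℂ) L (𝓝 (φ a))

theorem IsNearlyScalarOn.norm_inner_sub_le {a : H →L[ℂ] H} {W : Submodule ℂ H} {l : ℂ} {ε : ℝ}
    (h : IsNearlyScalarOn a W l ε) {v : H} (hvW : v ∈ W) (hv : ‖v‖ = 1) :
    ‖⟪v, a v⟫_ℂ - l‖ ≤ ε := by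
  simpa [hv] using h v hvW

theorem IsExcising.exists_tendsto_inner (hL : IsExcising L) [L.NeBot] (a : H →L[ℂ] H) :
    ∃ l, Tendsto (fun v ↦ ⟪v, a v⟫_ℂ) L (𝓝 l) := by
  refine CompleteSpace.complete (Metric.cauchy_iff.2 ⟨inferInstance, fun ε hε ↦ ?_⟩)
  obtain ⟨W, -, hW, l, hl⟩ := hL.exists_isNearlyScalarOn a (ε := ε / 3) (by positivity)
  refine ⟨Metric.closedBall l (ε / 3), ?_, fun x hx y hy ↦ ?_⟩
  · rw [mem_map]
    filter_upwards [hL.eventually_norm_eq_one, hW] with v hv hvW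
    simpa [dist_eq_norm] using hl.norm_inner_sub_le hvW hv
  · rw [Metric.mem_closedBall] at hx hy
    linarith [dist_triangle_right x y l]

theorem IsExcising.exists_isVectorLimit (hL : IsExcising L) [L.NeBot] :
    ∃ φ, IsVectorLimit φ L := by
  choose f hf using hL.exists_tendsto_inner
  refine ⟨⟨⟨f, fun a b ↦ ?_⟩, fun c a ↦ ?_⟩, hf⟩
  · refine tendsto_nhds_unique (hf (a + b)) ?_
    simpa [inner_add_right] using (hf a).add (hf b)
  · refine tendsto_nhds_unique (hf (c • a)) ?_
    simpa [inner_smul_right] using (hf a).const_mul c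

variable {φ : (H →L[ℂ] H) →ₗ[ℂ] ℂ}

theorem IsVectorLimit.tendsto_reApplyInnerSelf (hφ : IsVectorLimit φ L) (a : H →L[ℂ] H) :
    Tendsto a.reApplyInnerSelf L (𝓝 (φ a).re) := by
  have hre : a.reApplyInnerSelf = fun v ↦ (⟪v, a v⟫_ℂ).re := by
    funext v
    rw [ContinuousLinearMap.reApplyInnerSelf_apply, inner_re_symm, RCLike.re_to_complex]
  rw [hre]
  exact (Complex.continuous_re.tendsto _).comp (hφ a)

variable [L.NeBot]

theorem IsVectorLimit.map_eq_of_eventually (hφ : IsVectorLimit φ L) {a : H →L[ℂ] H} {z : ℂ}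
    (h : ∀ᶠ v in L, ⟪v, a v⟫_ℂ = z) : φ a = z :=
  tendsto_nhds_unique (hφ a) (tendsto_const_nhds.congr' (h.mono fun _ hv ↦ hv.symm))

theorem IsVectorLimit.map_starProjection (hφ : IsVectorLimit φ L) (hL : ∀ᶠ v in L, ‖v‖ = 1)
    {W : Submodule ℂ H} [W.HasOrthogonalProjection] (hW : ∀ᶠ v in L, v ∈ W) :
    φ W.starProjection = 1 := by
  refine hφ.map_eq_of_eventually ?_
  filter_upwards [hL, hW] with v hv hvW
  simp [Submodule.starProjection_eq_self_iff.2 hvW, hv]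

theorem IsVectorLimit.norm_map_sub_le (hφ : IsVectorLimit φ L) (hL : ∀ᶠ v in L, ‖v‖ = 1)
    {a : H →L[ℂ] H} {W : Submodule ℂ H} {l : ℂ} {ε : ℝ} (ha : IsNearlyScalarOn a W l ε)
    (hW : ∀ᶠ v in L, v ∈ W) : ‖φ a - l‖ ≤ ε := by
  refine le_of_tendsto ((hφ a).sub_const l).norm ?_
  filter_upwards [hL, hW] with v hv hvW using ha.norm_inner_sub_le hvW hv

variable [CompleteSpace H]

theorem inner_star_mul_self_apply (a : H →L[ℂ] H) (v : H) :
    ⟪v, (star a * a) v⟫_ℂ = (‖a v‖ ^ 2 : ℝ) := by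
  rw [mul_apply_eq_comp, ContinuousLinearMap.star_eq_adjoint,
    ContinuousLinearMap.adjoint_inner_right, inner_self_eq_norm_sq_to_K]
  norm_cast

theorem IsVectorLimit.isState (hφ : IsVectorLimit φ L) (hL : ∀ᶠ v in L, ‖v‖ = 1) :
    IsState φ := by
  refine ⟨fun a ↦ ?_, hφ.map_eq_of_eventually (hL.mono fun v hv ↦ by simp [hv])⟩
  have hlim := hφ (star a * a)
  simp_rw [inner_star_mul_self_apply] at hlim
  have hnonneg : 0 ≤ φ (star a * a) := ge_of_tendsto' hlim fun v ↦ by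
    exact_mod_cast sq_nonneg ‖a v‖
  exact ⟨(Complex.nonneg_iff.1 hnonneg).1, (Complex.nonneg_iff.1 hnonneg).2.symm⟩

end VectorLimit

section Purity

variable {H : Type*} [NormedAddCommGroup H] [InnerProductSpace ℂ H] [CompleteSpace H]

theorem IsNearlyScalarOn.compress_le {a : H →L[ℂ] H} {W : Submodule ℂ H}
    [W.HasOrthogonalProjection] {l : ℂ} {ε : ℝ} (h : IsNearlyScalarOn a W l ε)
    (ha : IsSelfAdjoint a) :
    W.starProjection * a * W.starProjection ≤ ((l.re + ε : ℝ) : ℂ) • W.starProjection := by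
  set p := W.starProjection with hp
  have hpsa : IsSelfAdjoint p := isStarProjection_starProjection.isSelfAdjoint
  have hsa : IsSelfAdjoint (((l.re + ε : ℝ) : ℂ) • p - p * a * p) :=
    (IsSelfAdjoint.smul (Complex.conj_ofReal _) hpsa).sub (ha.conjugate_self hpsa)
  refine (ContinuousLinearMap.le_def _ _).2
    ⟨ContinuousLinearMap.isSelfAdjoint_iff_isSymmetric.1 hsa, fun x ↦ ?_⟩
  have hinner : ⟪x, (((l.re + ε : ℝ) : ℂ) • p - p * a * p) x⟫_ℂ =
      (l.re + ε : ℝ) * (‖p x‖ : ℂ) ^ 2 - ⟪p x, a (p x)⟫_ℂ := by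
    have hnorm : ⟪x, p x⟫_ℂ = (‖p x‖ : ℂ) ^ 2 := by
      rw [← Complex.coe_algebraMap, ← inner_self_eq_norm_sq_to_K, hp,
        W.inner_starProjection_left_eq_right,
        Submodule.starProjection_eq_self_iff.2 (W.starProjection_apply_mem x)]
    rw [sub_apply, mul_apply_eq_comp, mul_apply_eq_comp, smul_apply, inner_sub_right,
      inner_smul_right, hnorm, hp, ← W.inner_starProjection_left_eq_right]
  have hbound := (Complex.re_le_norm _).trans (h (p x) (W.starProjection_apply_mem x))
  rw [ContinuousLinearMap.reApplyInnerSelf_apply, inner_re_symm, hinner]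
  simp only [RCLike.re_to_complex, Complex.coe_algebraMap, ← Complex.ofReal_pow, Complex.sub_re,
    Complex.re_mul_ofReal, Complex.ofReal_re] at hbound ⊢
  linarith

theorem IsState.re_map_le_of_isNearlyScalarOn {ψ : (H →L[ℂ] H) →ₗ[ℂ] ℂ} (hψ : IsState ψ)
    {a : H →L[ℂ] H} (ha : IsSelfAdjoint a) {W : Submodule ℂ H} [W.HasOrthogonalProjection] {l : ℂ}
    {ε : ℝ} (hl : IsNearlyScalarOn a W l ε) (hW : ψ W.starProjection = 1) :
    (ψ a).re ≤ l.re + ε := by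
  have hre := hψ.re_map_le (hl.compress_le ha)
  rwa [hψ.map_compress isStarProjection_starProjection hW, map_smul, hW, smul_eq_mul, mul_one,
    Complex.ofReal_re] at hre

variable {L : Filter H} [L.NeBot] {φ ψ : (H →L[ℂ] H) →ₗ[ℂ] ℂ}

theorem IsVectorLimit.re_map_le (hφ : IsVectorLimit φ L) (hL : IsExcising L) (hψ : IsState ψ)
    (hproj : ∀ p, IsStarProjection p → φ p = 1 → ψ p = 1) {a : H →L[ℂ] H}
    (ha : IsSelfAdjoint a) : (ψ a).re ≤ (φ a).re := by
  refine le_of_forall_pos_le_add fun ε hε ↦ ?_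
  obtain ⟨W, hclosed, hW, l, hl⟩ := hL.exists_isNearlyScalarOn a (half_pos hε)
  have : CompleteSpace W := hclosed.completeSpace_coe
  have hψW := hproj _ isStarProjection_starProjection
    (hφ.map_starProjection hL.eventually_norm_eq_one hW)
  have hψa := hψ.re_map_le_of_isNearlyScalarOn ha hl hψW
  have hφa := (Complex.abs_re_le_norm _).trans
    (hφ.norm_map_sub_le hL.eventually_norm_eq_one hl hW)
  rw [Complex.sub_re] at hφa
  linarith [(abs_le.1 hφa).1]

theorem IsVectorLimit.eq_of_map_isStarProjection (hφ : IsVectorLimit φ L) (hL : IsExcising L)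
    (hψ : IsState ψ) (hproj : ∀ p, IsStarProjection p → φ p = 1 → ψ p = 1) : ψ = φ := by
  refine hψ.ext_of_isSelfAdjoint (hφ.isState hL.eventually_norm_eq_one) fun a ha ↦
    (hφ.re_map_le hL hψ hproj ha).antisymm ?_
  simpa using hφ.re_map_le hL hψ hproj ha.neg

theorem IsVectorLimit.isPureState (hφ : IsVectorLimit φ L) (hL : IsExcising L) :
    IsPureState φ := by
  refine ⟨hφ.isState hL.eventually_norm_eq_one, fun ψ₁ ψ₂ t hψ₁ hψ₂ ht0 ht1 hconv ↦ ?_⟩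
  have hproj (p) (hp : IsStarProjection p) (h1 : φ p = 1) : ψ₁ p = 1 ∧ ψ₂ p = 1 :=
    hψ₁.map_eq_one_of_convex_combination hψ₂ ht0 ht1 hp (by simpa [hconv] using h1)
  rw [hφ.eq_of_map_isStarProjection hL hψ₁ fun p hp h1 ↦ (hproj p hp h1).1,
    hφ.eq_of_map_isStarProjection hL hψ₂ fun p hp h1 ↦ (hproj p hp h1).2]

end Purity

/-! ### Restriction to a masa -/

/-- `A` is a maximal abelian self-adjoint subalgebra. -/
structure IsMasa {M : Type*} [Ring M] [StarRing M] [Algebra ℂ M] [StarModule ℂ M]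
    (A : StarSubalgebra ℂ M) : Prop where
  mul_comm : ∀ a ∈ A, ∀ b ∈ A, a * b = b * a
  eq_of_le : ∀ B : StarSubalgebra ℂ M, (∀ a ∈ B, ∀ b ∈ B, a * b = b * a) → A ≤ B → B = A

section Masa

variable {M : Type*} [Ring M] [StarRing M] [Algebra ℂ M] [StarModule ℂ M] {A : StarSubalgebra ℂ M}

theorem IsMasa.mem_of_isSelfAdjoint_of_commute (hA : IsMasa A) {x : M} (hx : IsSelfAdjoint x)
    (hcomm : ∀ a ∈ A, Commute x a) : x ∈ A := by
  have hmul : ∀ a ∈ insert x (A : Set M), ∀ b ∈ insert x (A : Set M), a * b = b * a := by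
    rintro a (rfl | ha) b (rfl | hb)
    exacts [rfl, hcomm b hb, (hcomm a ha).symm, hA.mul_comm a ha b hb]
  have hstar : ∀ b ∈ insert x (A : Set M), star b ∈ insert x (A : Set M) := by
    rintro b (rfl | hb)
    exacts [Or.inl hx.star_eq, Or.inr (star_mem hb)]
  have hadjoin := StarAlgebra.isMulCommutative_adjoin ℂ hmul
    fun a ha b hb ↦ hmul a ha _ (hstar b hb)
  rw [← hA.eq_of_le (StarAlgebra.adjoin ℂ (insert x (A : Set M)))
    (fun a ha b hb ↦ congrArg Subtype.val (hadjoin.is_comm.comm ⟨a, ha⟩ ⟨b, hb⟩))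
    ((Set.subset_insert x A).trans (StarAlgebra.subset_adjoin ℂ _))]
  exact StarAlgebra.subset_adjoin ℂ _ (Set.mem_insert x A)

theorem IsMasa.mem_of_commute (hA : IsMasa A) {x : M} (hcomm : ∀ a ∈ A, Commute x a) : x ∈ A := by
  have hstar (a) (ha : a ∈ A) : Commute (star x) a := by
    simpa using (hcomm _ (star_mem ha)).star_star
  rw [← realPart_add_I_smul_imaginaryPart x]
  refine add_mem (hA.mem_of_isSelfAdjoint_of_commute (ℜ x).2 fun a ha ↦ ?_)
    (A.smul_mem (hA.mem_of_isSelfAdjoint_of_commute (ℑ x).2 fun a ha ↦ ?_) _)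
  · rw [realPart_apply_coe]
    exact ((hcomm a ha).add_left (hstar a ha)).smul_left _
  · rw [imaginaryPart_apply_coe]
    exact (((hcomm a ha).sub_left (hstar a ha)).smul_left _).smul_left _

theorem IsMasa.coe_eq_centralizer (hA : IsMasa A) : (A : Set M) = Set.centralizer A :=
  Set.Subset.antisymm (fun a ha b hb ↦ hA.mul_comm b hb a ha)
    fun _ hx ↦ hA.mem_of_commute fun a ha ↦ (hx a ha).symm

end Masa

section CStarMasa

variable {M : Type*} [CStarAlgebra M] {A : StarSubalgebra ℂ M}

theorem IsMasa.isClosed (hA : IsMasa A) : IsClosed (A : Set M) := by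
  rw [hA.coe_eq_centralizer]
  exact Set.isClosed_centralizer _

theorem IsMasa.map_mul_of_isPureState (hA : IsMasa A) {φ : M →ₗ[ℂ] ℂ}
    (hφ : IsPureState (φ.comp A.subtype.toLinearMap)) {a b : M} (ha : a ∈ A) (hb : b ∈ A) :
    φ (a * b) = φ a * φ b := by
  have : IsClosed (A : Set M) := hA.isClosed
  let : CommCStarAlgebra A :=
    { StarSubalgebra.cstarAlgebra A with
      mul_comm := fun a b ↦ Subtype.ext (hA.mul_comm a a.2 b b.2) }
  exact IsPureState.map_mul (M := A) hφ ⟨a, ha⟩ ⟨b, hb⟩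

end CStarMasa

theorem exists_seq_forall_apply_eq_zero {𝕜 E F : Type*} [NontriviallyNormedField 𝕜]
    [NormedAddCommGroup E] [NormedSpace 𝕜 E] [TopologicalSpace.SeparableSpace E]
    [NormedAddCommGroup F] [NormedSpace 𝕜 F] {K : Set (E →L[𝕜] F)} (hne : K.Nonempty)
    (hK : ∀ x, (∀ a ∈ K, a x = 0) → x = 0) :
    ∃ f : ℕ → E →L[𝕜] F, (∀ n, f n ∈ K) ∧ ∀ x, (∀ n, f n x = 0) → x = 0 := by
  have : SecondCountableTopology E := UniformSpace.secondCountable_of_separable E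
  obtain ⟨T, hT, hunion⟩ := TopologicalSpace.isOpen_iUnion_countable
    (fun a : K ↦ {x : E | a.1 x ≠ 0}) fun a ↦ isOpen_ne_fun a.1.continuous continuous_const
  obtain ⟨a₀, ha₀⟩ := hne
  obtain ⟨f, hf⟩ := (hT.insert ⟨a₀, ha₀⟩).exists_eq_range (Set.insert_nonempty _ _)
  refine ⟨fun n ↦ f n, fun n ↦ (f n).2, fun x hx ↦ hK x fun a ha ↦ ?_⟩
  by_contra hne
  have hmem : x ∈ ⋃ a ∈ T, {x : E | a.1 x ≠ 0} := hunion ▸ Set.mem_iUnion.2 ⟨⟨a, ha⟩, hne⟩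
  obtain ⟨b, hb, hbx⟩ := Set.mem_iUnion₂.1 hmem
  obtain ⟨n, rfl⟩ : b ∈ Set.range f := hf ▸ Set.mem_insert_of_mem _ hb
  exact hbx (hx n)

section MasaOfOperators

variable {H : Type*} [NormedAddCommGroup H] [InnerProductSpace ℂ H] [CompleteSpace H]

theorem exists_injective_hasSum_smul_star_mul_self {f : ℕ → H →L[ℂ] H}
    (hf : ∀ x, (∀ n, f n x = 0) → x = 0) :
    ∃ h : H →L[ℂ] H, 0 ≤ h ∧ h ≤ 1 ∧ Function.Injective h ∧
      ∃ k : ℕ → ℂ, HasSum (fun n ↦ k n • (star (f n) * f n)) h := by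
  set k : ℕ → ℝ := fun n ↦ 1 / 2 / 2 ^ n / (‖f n‖ ^ 2 + 1)
  have hk (n : ℕ) : 0 < k n := by positivity
  set g : ℕ → H →L[ℂ] H := fun n ↦ (k n : ℂ) • (star (f n) * f n)
  have hg0 (n : ℕ) : 0 ≤ g n :=
    smul_nonneg (by exact_mod_cast (hk n).le) (star_mul_self_nonneg _)
  have hgnorm (n : ℕ) : ‖g n‖ ≤ 1 / 2 / 2 ^ n := by
    calc ‖g n‖ = k n * ‖f n‖ ^ 2 := by
          rw [norm_smul, Complex.norm_real, Real.norm_of_nonneg (hk n).le,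
            CStarRing.norm_star_mul_self, sq]
      _ ≤ k n * (‖f n‖ ^ 2 + 1) := mul_le_mul_of_nonneg_left (by linarith) (hk n).le
      _ = 1 / 2 / 2 ^ n := div_mul_cancel₀ _ (by positivity)
  have hgeom := hasSum_geometric_two' 1
  have hsum := (Summable.of_norm_bounded hgeom.summable hgnorm).hasSum
  have h0 := hsum.nonneg hg0
  refine ⟨_, h0, (CStarAlgebra.norm_le_one_iff_of_nonneg _ h0).1
    (hsum.norm_le_of_bounded hgeom hgnorm), ?_, _, hsum⟩
  refine (injective_iff_map_eq_zero _).2 fun x hx ↦ hf x fun n ↦ ?_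
  have hle := reApplyInnerSelf_mono (le_hasSum hsum n fun m _ ↦ hg0 m) x
  have hgx : (g n).reApplyInnerSelf x = k n * ‖f n x‖ ^ 2 := by
    rw [ContinuousLinearMap.reApplyInnerSelf_apply, inner_re_symm, smul_apply, inner_smul_right,
      inner_star_mul_self_apply, ← Complex.ofReal_mul, RCLike.re_to_complex, Complex.ofReal_re]
  rw [hgx, ContinuousLinearMap.reApplyInnerSelf_apply, hx, inner_zero_left, map_zero] at hle
  have hzero := nonpos_of_mul_nonpos_right hle (hk n)
  simpa using hzero.antisymm (sq_nonneg _)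

variable {A : StarSubalgebra ℂ (H →L[ℂ] H)} {φ : (H →L[ℂ] H) →ₗ[ℂ] ℂ}

-- If `x` were in the common kernel, it would be an eigenvector of all of `A`, so the projection
-- onto it would lie in `A`, and in the kernel of `φ`.
theorem IsMasa.eq_zero_of_forall_map_eq_zero (hA : IsMasa A) (hφ : IsState φ)
    (hrank : ∀ x, φ (InnerProductSpace.rankOne ℂ x x) = 0) {x : H}
    (hx : ∀ a ∈ A, φ a = 0 → a x = 0) : x = 0 := by
  have heigen (a) (ha : a ∈ A) : a x = φ a • x := by
    have h := hx (a - φ a • 1) (sub_mem ha (A.smul_mem (one_mem A) _)) (by simp [hφ.map_one])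
    simpa [sub_eq_zero] using h
  have hmem : InnerProductSpace.rankOne ℂ x x ∈ A := hA.mem_of_commute fun a ha ↦ by
    have hleft : a * InnerProductSpace.rankOne ℂ x x = φ a • InnerProductSpace.rankOne ℂ x x := by
      ext y
      simp [heigen a ha, smul_comm (φ a)]
    have hright : InnerProductSpace.rankOne ℂ x x * a = φ a • InnerProductSpace.rankOne ℂ x x := by
      ext y
      have hinner : ⟪x, a y⟫_ℂ = φ a * ⟪x, y⟫_ℂ := by
        rw [← ContinuousLinearMap.adjoint_inner_left, ← ContinuousLinearMap.star_eq_adjoint,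
          heigen _ (star_mem ha), hφ.map_star, inner_smul_left]
        simp
      simp [hinner, mul_smul]
    exact hright.trans hleft.symm
  simpa using hx _ hmem (hrank x)

theorem IsMasa.exists_injective_map_eq_zero [TopologicalSpace.SeparableSpace H] (hA : IsMasa A)
    (hφ : IsState φ) (hpure : IsPureState (φ.comp A.subtype.toLinearMap))
    (hrank : ∀ x, φ (InnerProductSpace.rankOne ℂ x x) = 0) :
    ∃ h ∈ A, 0 ≤ h ∧ h ≤ 1 ∧ Function.Injective h ∧ φ h = 0 := by
  obtain ⟨f, hfA, hf⟩ := exists_seq_forall_apply_eq_zero (K := {a | a ∈ A ∧ φ a = 0})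
    ⟨0, zero_mem A, map_zero φ⟩ fun x hx ↦
      hA.eq_zero_of_forall_map_eq_zero hφ hrank fun a ha h0 ↦ hx a ⟨ha, h0⟩
  obtain ⟨h, h0, h1, hinj, k, hsum⟩ := exists_injective_hasSum_smul_star_mul_self hf
  refine ⟨h, ?_, h0, h1, hinj, ?_⟩
  · exact hA.isClosed.mem_of_tendsto hsum <| .of_forall fun s ↦ sum_mem fun n _ ↦
      A.smul_mem (mul_mem (star_mem (hfA n).1) (hfA n).1) _
  · have hterm (n : ℕ) : φ (k n • (star (f n) * f n)) = 0 := by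
      rw [map_smul, hA.map_mul_of_isPureState hpure (star_mem (hfA n).1) (hfA n).1, (hfA n).2,
        mul_zero, smul_zero]
    have hφsum := hsum.map φ hφ.continuous
    simp only [Function.comp_def, hterm] at hφsum
    exact hφsum.unique hasSum_zero

variable {L : Filter H}

theorem IsVectorLimit.tendsto_vectorVariance (hφ : IsVectorLimit φ L) (S : H →L[ℂ] H) :
    Tendsto (vectorVariance S) L (𝓝 ((φ (star S * S)).re - ‖φ S‖ ^ 2)) := by
  have hsq := (Complex.continuous_re.tendsto _).comp (hφ (star S * S))
  simp only [Function.comp_def, inner_star_mul_self_apply, Complex.ofReal_re] at hsq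
  exact hsq.sub ((hφ S).norm.pow 2)

theorem IsVectorLimit.not_isPureState_comp_subtype [TopologicalSpace.SeparableSpace H] [L.NeBot]
    (hφ : IsVectorLimit φ L) (hL : IsGenericFilter L) (hA : IsMasa A) :
    ¬IsPureState (φ.comp A.subtype.toLinearMap) := by
  intro hpure
  have hstate := hφ.isState hL.eventually_norm_eq_one
  have hrank (x : H) : φ (InnerProductSpace.rankOne ℂ x x) = 0 :=
    hφ.map_eq_of_eventually <| (hL.eventually_inner_eq_zero x).mono fun v hv ↦ by simp [hv]
  obtain ⟨h, hhA, h0, h1, hinj, hφh⟩ := hA.exists_injective_map_eq_zero hstate hpure hrank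
  rcases hL.bounded_below_or_vectorVariance_ge h h0 h1 hinj with ⟨δ, hδ, hbelow⟩ | ⟨S, hS, hvar⟩
  · have hle := ge_of_tendsto (hφ.tendsto_reApplyInnerSelf h) hbelow
    rw [hφh, Complex.zero_re] at hle
    exact hδ.not_ge hle
  · have hSA : S ∈ A := hA.mem_of_commute fun b hb ↦ (hS b (hA.mul_comm b hb h hhA)).symm
    have hzero : (φ (star S * S)).re - ‖φ S‖ ^ 2 = 0 := by
      rw [hA.map_mul_of_isPureState hpure (star_mem hSA) hSA, hstate.map_star, RCLike.star_def,
        Complex.conj_mul', ← Complex.ofReal_pow, Complex.ofReal_re, sub_self]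
    have hge := ge_of_tendsto (hφ.tendsto_vectorVariance S) hvar
    rw [hzero] at hge
    norm_num at hge

end MasaOfOperators

/-- Akemann–Weaver: assuming the Continuum Hypothesis, `B(H)` for an infinite-dimensional
separable complex Hilbert space `H` has a pure state whose restriction to every maximal
abelian self-adjoint subalgebra is not pure. -/
theorem exists_pure_state_not_pure_on_any_masa
    (CH : Cardinal.continuum = Cardinal.aleph 1)
    (H : Type) [NormedAddCommGroup H] [InnerProductSpace ℂ H] [CompleteSpace H]
    (hsep : TopologicalSpace.SeparableSpace H) (hinf : ¬FiniteDimensional ℂ H) :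
    ∃ φ : (H →L[ℂ] H) →ₗ[ℂ] ℂ, IsPureState φ ∧
      ∀ A : StarSubalgebra ℂ (H →L[ℂ] H),
        (∀ a ∈ A, ∀ b ∈ A, a * b = b * a) →
        (∀ B : StarSubalgebra ℂ (H →L[ℂ] H),
          (∀ a ∈ B, ∀ b ∈ B, a * b = b * a) → A ≤ B → B = A) →
        ¬IsPureState (φ.comp A.subtype.toLinearMap) := by
  have CH₀ : Cardinal.continuum.{0} = Cardinal.aleph 1 :=
    Cardinal.lift_injective (by simpa using CH)
  have hcard : Cardinal.mk (H →L[ℂ] H) ≤ Cardinal.aleph 1 :=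
    CH₀ ▸ mk_continuousLinearMap_le_continuum ℂ H
  obtain ⟨L, _, hL⟩ := exists_isGenericFilter hinf hcard
  obtain ⟨φ, hφ⟩ := hL.exists_isVectorLimit
  exact ⟨φ, hφ.isPureState hL.toIsExcising, fun A hcomm hmax ↦
    hφ.not_isPureState_comp_subtype hL ⟨hcomm, hmax⟩⟩
end
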